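/- Let X be the punctured Möbius band with boundary circles C₁ and C₂. Suppose f : X → X is a boundary-preserving map with f(∂X) ⊆ C₁ such that the restriction, viewed as a map f|C₂ : C₂ → C₁, is essential, while the restriction, viewed as a map f|C₁ : C₁ → C₁, is inessential. Then f is boundary-homotopic to a map g : X → X having at most two fixed points, exactly one of which lies in X ∖ ∂X. -/

import Mathlib

open Set

namespace PMB

/-- The square [0,1] × [−1,1] as a subspace of ℝ². -/
def Sq : Set (ℝ × ℝ) := Set.Icc 0 1 ×ˢ Set.Icc (-1) 1

/-- The identification (0,y) ∼ (1,−y) on the square. -/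
def rel (p q : Sq) : Prop :=
  (p : ℝ × ℝ) = (q : ℝ × ℝ) ∨
  ((p : ℝ × ℝ).1 = 0 ∧ (q : ℝ × ℝ).1 = 1 ∧ (p : ℝ × ℝ).2 = -(q : ℝ × ℝ).2) ∨
  ((p : ℝ × ℝ).1 = 1 ∧ (q : ℝ × ℝ).1 = 0 ∧ (q : ℝ × ℝ).2 = -(p : ℝ × ℝ).2)

/-- The Möbius band: the quotient of the square by the identification. -/
def M := Quot rel

instance : TopologicalSpace M := inferInstanceAs (TopologicalSpace (Quot rel))

/-- The quotient map. -/
def qm : Sq → M := Quot.mk rel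

/-- The open disc of radius 1/4 centred at (1/2, 0). -/
def Bdisc : Set (ℝ × ℝ) := Metric.ball (1/2, 0) (1/4)

/-- The circle of radius 1/4 centred at (1/2, 0). -/
def Scirc : Set (ℝ × ℝ) := Metric.sphere (1/2, 0) (1/4)

/-- The punctured Möbius band, as a subset of the Möbius band. -/
def Xset : Set M := {m | m ∉ qm '' {p : Sq | (p : ℝ × ℝ) ∈ Bdisc}}

/-- The punctured Möbius band as a topological space. -/
abbrev X : Type := ↥Xset

/-- The boundary circle of the Möbius band. -/
def C1 : Set X := {x | ∃ p : Sq, qm p = (x : M) ∧ ((p : ℝ × ℝ).2 = 1 ∨ (p : ℝ × ℝ).2 = -1)}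

/-- The boundary circle coming from the removed disc. -/
def C2 : Set X := {x | ∃ p : Sq, qm p = (x : M) ∧ (p : ℝ × ℝ) ∈ Scirc}

/-- The boundary of the punctured Möbius band. -/
def Bd : Set X := C1 ∪ C2

/-- A self-map of the punctured Möbius band is boundary-preserving if it sends ∂X into ∂X. -/
def BoundaryPreserving (f : C(X, X)) : Prop := MapsTo f Bd Bd

/-- Two self-maps are boundary-homotopic if there is a homotopy between them keeping
∂X inside ∂X at all times. -/
def BoundaryHomotopic (f g : C(X, X)) : Prop :=
  ∃ H : ContinuousMap.Homotopy f g, ∀ x : X, x ∈ Bd → ∀ t : unitInterval, H (t, x) ∈ Bd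

/-- A continuous map is inessential if it is homotopic to a constant map. -/
def Inessential {α β : Type*} [TopologicalSpace α] [TopologicalSpace β] (f : C(α, β)) : Prop :=
  ∃ b : β, ContinuousMap.Homotopic f (ContinuousMap.const α b)

/-- A continuous map is essential if it is not homotopic to a constant map. -/
def Essential {α β : Type*} [TopologicalSpace α] [TopologicalSpace β] (f : C(α, β)) : Prop :=
  ¬ Inessential f

/-- The restriction of a self-map of X to a subset `s` mapped into a subset `t`,
as a continuous map between the subspaces. -/
def restrictMap (f : C(X, X)) {s t : Set X} (h : MapsTo f s t) : C(s, t) :=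
  ⟨fun x => ⟨f x, h x.2⟩, Continuous.subtype_mk (f.continuous.comp continuous_subtype_val) _⟩

/-!
Let `a`, `b` be the generators of the fundamental group of a wedge of two circles. There is a
homotopy equivalence of `X` with this wedge under which `C₁` corresponds to the first circle.
Homotope `f` to be constant on `C₁` and consider the composite `X → X → wedge`. It sends `C₂` into
the first circle, so over the square with a hole, which deforms onto its inner circle, it lifts to
the covering with fibre `F₂ / ⟨a⟩`, with `C₂` going to the closed loop at the root. The lifts along
the two vertical edges of the square lie over the same path and have their end points exchanged.
In a free group `x ^ 2 ∈ g ⟨a⟩ g⁻¹` implies `x ∈ g ⟨a⟩ g⁻¹`, so these lifts coincide and the lift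
descends to `X`.

The covering is the loop at the root with trees attached. By compactness the lift meets only
bounded heights, and contracting the trees deforms `f` to a map `g₀` into `C₁`, through maps that
collapse `C₁` to a point and send `C₂` into `C₁`. Performing this deformation across a collar of
`C₁`, with `g₀` on the part of `X` beyond the collar, leaves two fixed points: one on `C₁` and one
inside the collar.
-/

/-! ### The punctured square and its quotient -/

lemma mem_Sq {p : ℝ × ℝ} : p ∈ Sq ↔ |p.1 - 1 / 2| ≤ 1 / 2 ∧ |p.2| ≤ 1 := by
  rw [Sq, mem_prod, mem_Icc, mem_Icc, abs_le, abs_le]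
  constructor <;> rintro ⟨⟨_, _⟩, h⟩ <;> refine ⟨⟨?_, ?_⟩, h⟩ <;> linarith

/-- The square with the open disc removed, whose quotient is `X`. -/
abbrev PSq : Set (ℝ × ℝ) := Sq \ Bdisc

/-- The sup norm of `ℝ × ℝ` centred at `(1/2, 0)`; the removed disc is its ball of radius `1/4`. -/
noncomputable def innerGauge (p : ℝ × ℝ) : ℝ := max |p.1 - 1 / 2| |p.2|

/-- The norm centred at `(1/2, 0)` whose closed unit ball is the square. -/
noncomputable def outerGauge (p : ℝ × ℝ) : ℝ := max (2 * |p.1 - 1 / 2|) |p.2|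

@[fun_prop]
lemma continuous_innerGauge : Continuous innerGauge := by unfold innerGauge; fun_prop

@[fun_prop]
lemma continuous_outerGauge : Continuous outerGauge := by unfold outerGauge; fun_prop

lemma dist_center (p : ℝ × ℝ) : dist p (1 / 2, 0) = innerGauge p := by
  simp only [innerGauge, Prod.dist_eq, Real.dist_eq, sub_zero]

lemma innerGauge_le_outerGauge (p : ℝ × ℝ) : innerGauge p ≤ outerGauge p :=
  max_le_max_right _ (by linarith [abs_nonneg (p.1 - 1 / 2)])

lemma mem_PSq {p : ℝ × ℝ} : p ∈ PSq ↔ outerGauge p ≤ 1 ∧ 1 / 4 ≤ innerGauge p := by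
  rw [mem_sdiff, mem_Sq, Bdisc, Metric.mem_ball, dist_center, not_lt, outerGauge, max_le_iff]
  constructor <;> rintro ⟨⟨_, _⟩, _⟩ <;> refine ⟨⟨?_, ?_⟩, ?_⟩ <;> linarith

lemma abs_snd_le_one (p : PSq) : |p.1.2| ≤ 1 := (mem_Sq.1 p.2.1).2

lemma fst_mem_Icc (p : PSq) : p.1.1 ∈ Icc (0 : ℝ) 1 := p.2.1.1

instance : CompactSpace PSq :=
  isCompact_iff_compactSpace.1 ((isCompact_Icc.prod isCompact_Icc).diff Metric.isOpen_ball)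

/-- The embedding of the Möbius band into `ℝ⁴` given by
`(x, y) ↦ (u, u (1 - 2x), u y, (1 - 2x) y)` with `u = x (1 - x)`. -/
noncomputable def mobiusEmbedding : M → ℝ × ℝ × ℝ × ℝ :=
  Quot.lift
    (fun p : Sq => (p.1.1 * (1 - p.1.1), p.1.1 * (1 - p.1.1) * (1 - 2 * p.1.1),
      p.1.1 * (1 - p.1.1) * p.1.2, (1 - 2 * p.1.1) * p.1.2)) <| by
    rintro ⟨⟨x, y⟩, hp⟩ ⟨⟨x', y'⟩, hq⟩ h
    simp only [rel, Prod.mk.injEq] at h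
    rcases h with ⟨rfl, rfl⟩ | ⟨rfl, rfl, rfl⟩ | ⟨rfl, rfl, rfl⟩ <;> norm_num

lemma continuous_mobiusEmbedding : Continuous mobiusEmbedding :=
  continuous_quot_lift _ (by fun_prop)

lemma rel_of_mobiusEmbedding_eq {p q : Sq}
    (h : mobiusEmbedding (qm p) = mobiusEmbedding (qm q)) : rel p q := by
  obtain ⟨⟨x, y⟩, hp⟩ := p
  obtain ⟨⟨x', y'⟩, hq⟩ := q
  simp only [mobiusEmbedding, qm, Prod.mk.injEq] at h
  obtain ⟨hu, hx, hy, hv⟩ := h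
  simp only [rel, Prod.mk.injEq]
  by_cases hu0 : x * (1 - x) = 0
  · have hu0' : x' * (1 - x') = 0 := hu ▸ hu0
    rw [mul_eq_zero, sub_eq_zero] at hu0 hu0'
    rcases hu0 with rfl | rfl <;> rcases hu0' with rfl | rfl <;> norm_num at hv ⊢ <;> linarith
  · rw [← hu] at hx hy
    have hx' : x = x' := by linarith [mul_left_cancel₀ hu0 hx]
    exact Or.inl ⟨hx', mul_left_cancel₀ hu0 hy⟩

lemma injective_mobiusEmbedding : Function.Injective mobiusEmbedding := by
  rintro ⟨p⟩ ⟨q⟩ h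
  exact Quot.sound (rel_of_mobiusEmbedding_eq h)

instance : T2Space M :=
  .of_injective_continuous injective_mobiusEmbedding continuous_mobiusEmbedding

lemma qm_eq_qm {p q : Sq} : qm p = qm q ↔ rel p q :=
  ⟨fun h => rel_of_mobiusEmbedding_eq (congrArg mobiusEmbedding h), Quot.sound⟩

lemma qm_mem_Xset (p : PSq) : qm ⟨p, p.2.1⟩ ∈ Xset := by
  rintro ⟨q, hq, h⟩
  have hq' : |q.1.1 - 1 / 2| < 1 / 4 :=
    (max_lt_iff.1 ((dist_center q).symm.trans_lt (Metric.mem_ball.1 hq))).1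
  rw [abs_lt] at hq'
  rcases qm_eq_qm.1 h with h | ⟨h, -⟩ | ⟨h, -⟩
  · exact p.2.2 ((show q.1 = p.1 from h) ▸ hq)
  · linarith
  · linarith

/-- The projection of the punctured square onto the punctured Möbius band. -/
def proj : C(PSq, X) where
  toFun p := ⟨qm ⟨p, p.2.1⟩, qm_mem_Xset p⟩
  continuous_toFun := (continuous_quot_mk.comp (by fun_prop)).subtype_mk _

lemma surjective_proj : Function.Surjective proj := by
  rintro ⟨⟨p⟩, hm⟩
  exact ⟨⟨p, p.2, fun h => hm ⟨p, h, rfl⟩⟩, rfl⟩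

lemma proj_eq_proj {p q : PSq} : proj p = proj q ↔ rel ⟨p, p.2.1⟩ ⟨q, q.2.1⟩ := by
  rw [← qm_eq_qm]
  exact Subtype.ext_iff

instance : CompactSpace X := ⟨surjective_proj.range_eq ▸ isCompact_range proj.continuous⟩

/-- A function on the punctured square is seam compatible if it respects the identification
`(0, y) ∼ (1, -y)`. -/
def SeamCompatible {Z : Type*} (k : PSq → Z) : Prop :=
  ∀ p q : PSq, p.1.1 = 0 → q.1.1 = 1 → p.1.2 = -q.1.2 → k p = k q

lemma seamCompatible_proj : SeamCompatible proj := fun _ _ hp hq h =>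
  proj_eq_proj.2 (Or.inr (Or.inl ⟨hp, hq, h⟩))

lemma SeamCompatible.eq_of_proj_eq {Z : Type*} {k : PSq → Z} (hk : SeamCompatible k) {p q : PSq}
    (h : proj p = proj q) : k p = k q := by
  rcases proj_eq_proj.1 h with h | ⟨hp, hq, h⟩ | ⟨hp, hq, h⟩
  · exact congrArg k (Subtype.ext h)
  · exact hk p q hp hq h
  · exact (hk q p hq hp h).symm

-- `proj` is proper, so its product with any identity map is closed.
lemma isQuotientMap_id_prodMap_proj (T : Type*) [TopologicalSpace T] :
    Topology.IsQuotientMap ((ContinuousMap.id T).prodMap proj) :=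
  (isProperMap_id.prodMap proj.continuous.isProperMap).isClosedMap.isQuotientMap
    (continuous_id.prodMap proj.continuous) (Function.surjective_id.prodMap surjective_proj)

section Descend

variable {T Z : Type*} [TopologicalSpace T] [TopologicalSpace Z]

lemma factorsThrough_id_prodMap_proj {K : C(T × PSq, Z)}
    (hK : ∀ t, SeamCompatible fun p => K (t, p)) :
    Function.FactorsThrough K ((ContinuousMap.id T).prodMap proj) := by
  rintro ⟨t, p⟩ ⟨t', p'⟩ h
  obtain ⟨ht, hp⟩ := Prod.ext_iff.1 h
  obtain rfl : t = t' := ht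
  exact (hK t).eq_of_proj_eq hp

/-- The map on `T × X` induced by a family of seam compatible maps parametrised by `T`. -/
noncomputable def descend (K : C(T × PSq, Z)) (hK : ∀ t, SeamCompatible fun p => K (t, p)) :
    C(T × X, Z) :=
  (isQuotientMap_id_prodMap_proj T).lift K (factorsThrough_id_prodMap_proj hK)

@[simp]
lemma descend_apply (K : C(T × PSq, Z)) (hK : ∀ t, SeamCompatible fun p => K (t, p)) (t : T)
    (p : PSq) : descend K hK (t, proj p) = K (t, p) :=
  DFunLike.congr_fun ((isQuotientMap_id_prodMap_proj T).lift_comp K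
    (factorsThrough_id_prodMap_proj hK)) (t, p)

end Descend

lemma seamCompatible_abs_snd : SeamCompatible fun p => |p.1.2| := fun _ _ _ _ h => by
  simp only [h, abs_neg]

/-- The level of a point of `X`: the absolute value of its second coordinate in the square. -/
noncomputable def lev : C(X, ℝ) :=
  (descend (T := Unit) ⟨fun a => |a.2.1.2|, by fun_prop⟩ fun _ => seamCompatible_abs_snd).curry ()

@[simp]
lemma lev_proj (p : PSq) : lev (proj p) = |p.1.2| :=
  descend_apply (T := Unit) ⟨fun a => |a.2.1.2|, by fun_prop⟩ (fun _ => seamCompatible_abs_snd) () p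

lemma lev_le_one (x : X) : lev x ≤ 1 := by
  obtain ⟨p, rfl⟩ := surjective_proj x
  exact (lev_proj p).trans_le (abs_snd_le_one p)

lemma exists_proj_eq {x : X} {p : Sq} (h : qm p = x) : ∃ hp, proj ⟨p, hp⟩ = x :=
  ⟨⟨p.2, fun hp => x.2 ⟨p, hp, h⟩⟩, Subtype.ext h⟩

lemma mem_C1_iff {x : X} : x ∈ C1 ↔ lev x = 1 := by
  constructor
  · rintro ⟨p, hp, h⟩
    obtain ⟨hp, rfl⟩ := exists_proj_eq hp
    rcases h with h | h <;> simp [h]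
  · intro h
    obtain ⟨p, rfl⟩ := surjective_proj x
    exact ⟨⟨p, p.2.1⟩, rfl, eq_or_eq_neg_of_abs_eq (lev_proj p ▸ h)⟩

lemma mem_C2_iff {x : X} : x ∈ C2 ↔ ∃ p, proj p = x ∧ innerGauge p = 1 / 4 := by
  simp only [C2, Scirc, Metric.mem_sphere, dist_center, mem_ofPred_eq]
  constructor
  · rintro ⟨p, hp, h⟩
    obtain ⟨hp, rfl⟩ := exists_proj_eq hp
    exact ⟨_, rfl, h⟩
  · rintro ⟨p, rfl, h⟩
    exact ⟨⟨p, p.2.1⟩, rfl, h⟩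

lemma lev_le_of_mem_C2 {x : X} (hx : x ∈ C2) : lev x ≤ 1 / 4 := by
  obtain ⟨p, rfl, h⟩ := mem_C2_iff.1 hx
  rw [lev_proj, ← h]
  exact le_max_right _ _

/-! ### Collar of `C₁` -/

/-- The odd truncation of `y` to `[-r, r]`. -/
noncomputable def clamp (r y : ℝ) : ℝ := max (-r) (min r y)

@[fun_prop]
lemma continuous_clamp {T : Type*} [TopologicalSpace T] {r y : T → ℝ} (hr : Continuous r)
    (hy : Continuous y) : Continuous fun t => clamp (r t) (y t) := by
  unfold clamp; fun_prop

lemma clamp_neg {r : ℝ} (hr : 0 ≤ r) (y : ℝ) : clamp r (-y) = -clamp r y := by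
  simp only [clamp, max_def, min_def]
  split_ifs <;> linarith

lemma clamp_of_abs_le {r y : ℝ} (h : |y| ≤ r) : clamp r y = y := by
  rw [clamp, min_eq_right (abs_le.1 h).2, max_eq_right (abs_le.1 h).1]

lemma abs_clamp {r : ℝ} (hr : 0 ≤ r) (y : ℝ) : |clamp r y| = min r |y| := by
  wlog hy : 0 ≤ y generalizing y
  · rw [← abs_neg, ← clamp_neg hr, ← abs_neg y, this _ (by linarith)]
  · rw [clamp, abs_of_nonneg hy, max_eq_right (by linarith [le_min hr hy]),
      abs_of_nonneg (le_min hr hy)]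

lemma clamp_of_nonneg {r y : ℝ} (hr : 0 ≤ r) (hy : 0 ≤ y) : clamp r y = min r y :=
  max_eq_right (by linarith [le_min hr hy])

/-- The conditions on `ψ` under which `(x, y) ↦ (x, ψ y)` is a self-map of the punctured square
compatible with the identification `(0, y) ∼ (1, -y)`. -/
structure IsVerticalProfile (ψ : ℝ → ℝ) : Prop where
  odd : Function.Odd ψ
  abs_le_one : ∀ y, |y| ≤ 1 → |ψ y| ≤ 1
  eq_or_le_abs : ∀ y, ψ y = y ∨ 1 / 4 ≤ |ψ y|

lemma IsVerticalProfile.mem_PSq {ψ : ℝ → ℝ} (hψ : IsVerticalProfile ψ) (p : PSq) :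
    (p.1.1, ψ p.1.2) ∈ PSq := by
  rcases hψ.eq_or_le_abs p.1.2 with h | h
  · rw [h]; exact p.2
  · refine ⟨⟨p.2.1.1, abs_le.1 (hψ.abs_le_one _ (abs_snd_le_one p))⟩, fun hp => ?_⟩
    rw [Bdisc, Metric.mem_ball, dist_center] at hp
    exact absurd (h.trans (le_max_right _ _)) hp.not_ge

section VerticalMap

variable {T : Type*} [TopologicalSpace T]

/-- The family of self-maps of `X` induced by `(x, y) ↦ (x, ψ (t, y))`. -/
noncomputable def verticalMap (ψ : C(T × ℝ, ℝ)) (hψ : ∀ t, IsVerticalProfile fun y => ψ (t, y)) :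
    C(T × X, X) :=
  descend ⟨fun a => proj ⟨_, (hψ a.1).mem_PSq a.2⟩, by fun_prop⟩ fun t _ _ hp hq h =>
    seamCompatible_proj _ _ hp hq ((congrArg (fun y => ψ (t, y)) h).trans ((hψ t).odd _))

lemma verticalMap_proj (ψ : C(T × ℝ, ℝ)) (hψ : ∀ t, IsVerticalProfile fun y => ψ (t, y)) (t : T)
    (p : PSq) : verticalMap ψ hψ (t, proj p) = proj ⟨_, (hψ t).mem_PSq p⟩ :=
  descend_apply ⟨fun a => proj ⟨_, (hψ a.1).mem_PSq a.2⟩, _⟩ _ t p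

lemma verticalMap_proj_eq_self {ψ : C(T × ℝ, ℝ)} {hψ : ∀ t, IsVerticalProfile fun y => ψ (t, y)}
    {t : T} {p : PSq} (h : ψ (t, p.1.2) = p.1.2) : verticalMap ψ hψ (t, proj p) = proj p :=
  (verticalMap_proj ψ hψ t p).trans (congrArg proj (Subtype.ext (Prod.ext rfl h)))

end VerticalMap

lemma isVerticalProfile_squeeze (r : ℝ) : IsVerticalProfile (clamp (max (1 / 3) r)) := by
  have hr : 1 / 3 ≤ max (1 / 3) r := le_max_left _ _
  refine ⟨clamp_neg (by linarith), fun y hy => ?_, fun y => ?_⟩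
  · rw [abs_clamp (by linarith)]
    exact (min_le_right _ _).trans hy
  · rcases le_total |y| (max (1 / 3) r) with h | h
    · exact Or.inl (clamp_of_abs_le h)
    · rw [abs_clamp (by linarith), min_eq_left h]
      exact Or.inr (by linarith)

/-- The vertical retraction of `X` onto the region of level at most `max (1/3) r`. -/
noncomputable def squeeze : C(ℝ × X, X) :=
  verticalMap ⟨fun a => clamp (max (1 / 3) a.1) a.2, by fun_prop⟩ isVerticalProfile_squeeze

lemma lev_squeeze (r : ℝ) (x : X) : lev (squeeze (r, x)) = min (max (1 / 3) r) (lev x) := by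
  obtain ⟨p, rfl⟩ := surjective_proj x
  rw [squeeze, verticalMap_proj, lev_proj, lev_proj]
  exact abs_clamp (le_max_of_le_left (by norm_num)) _

lemma squeeze_of_one_le {r : ℝ} (hr : 1 ≤ r) (x : X) : squeeze (r, x) = x := by
  obtain ⟨p, rfl⟩ := surjective_proj x
  exact verticalMap_proj_eq_self
    (clamp_of_abs_le ((abs_snd_le_one p).trans (le_max_of_le_right hr)))

/-- The profile pushing `|y| ≥ 1/2` to `|y| = 1` as `t` goes from `0` to `1`. -/
noncomputable def stretchProfile (t y : ℝ) : ℝ := clamp 1 (y + 3 * t * (y - clamp (1 / 4) y))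

lemma stretchProfile_neg (t y : ℝ) : stretchProfile t (-y) = -stretchProfile t y := by
  rw [stretchProfile, stretchProfile, ← clamp_neg zero_le_one, clamp_neg (by norm_num)]
  ring_nf

lemma stretchProfile_of_nonneg {t y : ℝ} (ht : 0 ≤ t) (hy : 0 ≤ y) :
    stretchProfile t y = min 1 (y + 3 * t * (y - min (1 / 4) y)) := by
  have h : 0 ≤ 3 * t * (y - min (1 / 4) y) :=
    mul_nonneg (by linarith) (by linarith [min_le_right (1 / 4) y])
  rw [stretchProfile, clamp_of_nonneg (by norm_num) hy, clamp_of_nonneg one_pos.le (by linarith)]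

lemma abs_stretchProfile {t : ℝ} (ht : 0 ≤ t) (y : ℝ) :
    |stretchProfile t y| = min 1 (|y| + 3 * t * (|y| - min (1 / 4) |y|)) := by
  wlog hy : 0 ≤ y generalizing y
  · rw [← abs_neg, ← stretchProfile_neg, ← abs_neg y, this _ (by linarith)]
  · rw [abs_of_nonneg hy, ← stretchProfile_of_nonneg ht hy, abs_of_nonneg]
    have h : 0 ≤ 3 * t * (y - min (1 / 4) y) :=
      mul_nonneg (by linarith) (by linarith [min_le_right (1 / 4) y])
    exact stretchProfile_of_nonneg ht hy ▸ le_min zero_le_one (by linarith)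

lemma stretchProfile_of_abs_le {t y : ℝ} (hy : |y| ≤ 1 / 4) : stretchProfile t y = y := by
  rw [stretchProfile, clamp_of_abs_le hy, sub_self, mul_zero, add_zero,
    clamp_of_abs_le (hy.trans (by norm_num))]

lemma stretchProfile_of_abs_eq_one {t y : ℝ} (ht : 0 ≤ t) (hy : |y| = 1) :
    stretchProfile t y = y := by
  have h1 : stretchProfile t 1 = 1 := by
    rw [stretchProfile_of_nonneg ht zero_le_one, min_eq_left]
    norm_num [ht]
  rcases eq_or_eq_neg_of_abs_eq hy with rfl | rfl
  · exact h1
  · rw [stretchProfile_neg, h1]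

lemma isVerticalProfile_stretchProfile {t : ℝ} (ht : 0 ≤ t) :
    IsVerticalProfile (stretchProfile t) := by
  refine ⟨stretchProfile_neg t, fun y _ => ?_, fun y => ?_⟩
  · rw [abs_stretchProfile ht]
    exact min_le_left _ _
  · rcases le_total |y| (1 / 4) with h | h
    · exact Or.inl (stretchProfile_of_abs_le h)
    · refine Or.inr ?_
      rw [abs_stretchProfile ht, min_eq_left h]
      exact le_min (by norm_num) (by nlinarith)

/-- A deformation of `X` relative to its boundary, from the identity to a map sending the collar
`1/2 ≤ lev x` into `C1`. -/
noncomputable def stretch : C(unitInterval × X, X) :=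
  verticalMap ⟨fun a => stretchProfile a.1 a.2, by unfold stretchProfile; fun_prop⟩
    fun t => isVerticalProfile_stretchProfile t.2.1

lemma stretch_zero (x : X) : stretch (0, x) = x := by
  obtain ⟨p, rfl⟩ := surjective_proj x
  refine verticalMap_proj_eq_self (?_ : stretchProfile 0 p.1.2 = p.1.2)
  rw [stretchProfile, mul_zero, zero_mul, add_zero, clamp_of_abs_le (abs_snd_le_one p)]

lemma stretch_of_mem_Bd (t : unitInterval) {x : X} (hx : x ∈ Bd) : stretch (t, x) = x := by
  rcases hx with hx | hx
  · obtain ⟨p, rfl⟩ := surjective_proj x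
    rw [mem_C1_iff, lev_proj] at hx
    exact verticalMap_proj_eq_self (stretchProfile_of_abs_eq_one t.2.1 hx)
  · obtain ⟨p, rfl, hp⟩ := mem_C2_iff.1 hx
    exact verticalMap_proj_eq_self (stretchProfile_of_abs_le (hp ▸ le_max_right _ _))

lemma stretch_one_mem_C1 {x : X} (hx : 1 / 2 ≤ lev x) : stretch (1, x) ∈ C1 := by
  obtain ⟨p, rfl⟩ := surjective_proj x
  rw [lev_proj] at hx
  rw [mem_C1_iff, stretch, verticalMap_proj, lev_proj]
  refine (abs_stretchProfile zero_le_one _).trans (min_eq_left ?_)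
  rw [min_eq_left (by linarith)]
  linarith

lemma homotopicRel_comp_stretch {Y : Type*} [TopologicalSpace Y] (f : C(X, Y)) :
    f.HomotopicRel (f.comp (stretch.curry 1)) Bd :=
  ⟨{ toContinuousMap := f.comp stretch
     map_zero_left := fun x => congrArg f (stretch_zero x)
     map_one_left := fun _ => rfl
     prop' := fun t _ hx => congrArg f (stretch_of_mem_Bd t hx) }⟩

/-- The collar coordinate of `X`, which is `0` on `C1` and `1` on the region of level at most
`1/2`. -/
noncomputable def depth : C(X, unitInterval) :=
  ⟨fun x => projIcc 0 1 zero_le_one (2 * (1 - lev x)),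
    continuous_projIcc.comp (by fun_prop)⟩

lemma coe_depth {x : X} (hx : 1 / 2 ≤ lev x) : (depth x : ℝ) = 2 * (1 - lev x) :=
  congrArg Subtype.val (projIcc_of_mem zero_le_one ⟨by linarith [lev_le_one x], by linarith⟩)

lemma depth_of_lev_le {x : X} (hx : lev x ≤ 1 / 2) : depth x = 1 :=
  projIcc_of_right_le zero_le_one (by linarith)

lemma depth_of_mem_C1 {x : X} (hx : x ∈ C1) : depth x = 0 :=
  projIcc_of_le_left zero_le_one (by linarith [mem_C1_iff.1 hx])

lemma depth_of_mem_C2 {x : X} (hx : x ∈ C2) : depth x = 1 :=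
  depth_of_lev_le (by linarith [lev_le_of_mem_C2 hx])

lemma C1_subset_Bd : C1 ⊆ Bd := subset_union_left

lemma C2_subset_Bd : C2 ⊆ Bd := subset_union_right

section CollarExtension

variable {Y : Type*} [TopologicalSpace Y]

open Classical in
lemma continuousOn_dite_mem_C1 (f : C(X, Y)) (h : C(unitInterval × C1, Y)) :
    ContinuousOn (fun a : unitInterval × X => if hx : a.2 ∈ C1 then h (a.1, ⟨a.2, hx⟩) else f a.2)
      (Prod.snd ⁻¹' C1) := by
  rw [continuousOn_iff_continuous_domRestrict]
  have hrestrict : (Prod.snd ⁻¹' C1 : Set (unitInterval × X)).domRestrict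
      (fun a => if hx : a.2 ∈ C1 then h (a.1, ⟨a.2, hx⟩) else f a.2) =
        fun a => h (a.1.1, ⟨a.1.2, a.2⟩) := funext fun a => dif_pos a.2
  rw [hrestrict]
  fun_prop

-- The homotopy `h` is run over the collar `1/2 ≤ lev x`, which `stretch` sends into `C1`.
lemma exists_collar_extension (f : C(X, Y)) (h : C(unitInterval × C1, Y))
    (h_zero : ∀ x, h (0, x) = f x) :
    ∃ H : C(unitInterval × X, Y), (∀ x, H (0, x) = f (stretch (1, x))) ∧
      (∀ t (x : C1), H (t, x) = h (t, x)) ∧ ∀ t, ∀ x ∈ C2, H (t, x) = f x := by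
  classical
  let h' : unitInterval × X → Y := fun a =>
    if hx : a.2 ∈ C1 then h (a.1, ⟨a.2, hx⟩) else f a.2
  have h'_eq : ∀ t {x : X} (hx : x ∈ C1), h' (t, x) = h (t, ⟨x, hx⟩) := fun t x hx => dif_pos hx
  have h'_zero : ∀ {x : X}, x ∈ C1 → h' (0, x) = f x := fun hx =>
    (h'_eq 0 hx).trans (h_zero ⟨_, hx⟩)
  let H : unitInterval × X → Y := fun a => if lev a.2 ≤ 1 / 2 then f (stretch (1, a.2)) else
    h' (a.1 * unitInterval.symm (depth a.2), stretch (1, a.2))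
  have hH : Continuous H := by
    refine continuous_if_le (by fun_prop) (by fun_prop) (by fun_prop)
      ((continuousOn_dite_mem_C1 f h).comp (by fun_prop) fun a ha => stretch_one_mem_C1 ha)
      fun a ha => ?_
    rw [depth_of_lev_le ha.le, unitInterval.symm_one, mul_zero, h'_zero (stretch_one_mem_C1 ha.ge)]
  refine ⟨⟨H, hH⟩, fun x => ?_, fun t x => ?_, fun t x hx => ?_⟩
  · by_cases hx : lev x ≤ 1 / 2
    · exact if_pos hx
    · refine (if_neg hx).trans (?_ : h' (0 * _, stretch (1, x)) = _)
      rw [zero_mul, h'_zero (stretch_one_mem_C1 (not_le.1 hx).le)]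
  · refine (if_neg (by norm_num [mem_C1_iff.1 x.2])).trans (?_ : h' (t * _, stretch (1, x.1)) = _)
    rw [depth_of_mem_C1 x.2, unitInterval.symm_zero, mul_one,
      stretch_of_mem_Bd 1 (C1_subset_Bd x.2), h'_eq t x.2]
  · refine (if_pos (by linarith [lev_le_of_mem_C2 hx])).trans ?_
    rw [stretch_of_mem_Bd 1 (C2_subset_Bd hx)]

end CollarExtension

/-- The maps sending the whole boundary into `C1`. -/
def BoundaryIntoC1 (f : C(X, X)) : Prop := MapsTo f Bd C1

lemma BoundaryIntoC1.congr {f g : C(X, X)} (hf : BoundaryIntoC1 f) (hfg : EqOn f g Bd) :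
    BoundaryIntoC1 g := MapsTo.congr hf hfg

lemma BoundaryHomotopic.of_homotopicWith {f g : C(X, X)}
    (h : f.HomotopicWith g BoundaryIntoC1) : BoundaryHomotopic f g :=
  h.elim fun H => ⟨H.toHomotopy, fun _ hx t => C1_subset_Bd (H.prop' t hx)⟩

lemma BoundaryIntoC1.homotopicWith_comp_stretch {f : C(X, X)} (hf : BoundaryIntoC1 f) :
    f.HomotopicWith (f.comp (stretch.curry 1)) BoundaryIntoC1 :=
  (homotopicRel_comp_stretch f).elim fun H =>
    ⟨{ H.toHomotopy with prop' := fun t => hf.congr fun _ hx => (H.prop' t _ hx).symm }⟩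

lemma exists_homotopicWith_eq_const_on_C1 {f : C(X, X)} (hf : BoundaryIntoC1 f)
    (h1 : Inessential (restrictMap f (hf.mono_left C1_subset_Bd))) :
    ∃ g : C(X, X), f.HomotopicWith g BoundaryIntoC1 ∧ ∃ c ∈ C1, ∀ x ∈ C1, g x = c := by
  obtain ⟨c, ⟨h⟩⟩ := h1
  obtain ⟨H, H_zero, H_C1, H_C2⟩ := exists_collar_extension f
    ((ContinuousMap.mk Subtype.val).comp h.toContinuousMap)
    fun x => congrArg Subtype.val (h.apply_zero x)
  refine ⟨H.curry 1, hf.homotopicWith_comp_stretch.trans ⟨?_⟩, c, c.2, fun x hx => ?_⟩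
  · refine { toContinuousMap := H, map_zero_left := H_zero, map_one_left := fun _ => rfl,
             prop' := ?_ }
    rintro t x (hx | hx)
    · exact (H_C1 t ⟨x, hx⟩).symm ▸ (h (t, ⟨x, hx⟩)).2
    · exact (H_C2 t x hx).symm ▸ hf (C2_subset_Bd hx)
  · exact (H_C1 1 ⟨x, hx⟩).trans (congrArg Subtype.val (h.apply_one _))

/-- The maps sending `C2` into `C1` and constant on `C1`. -/
structure CollapsesC1 (f : C(X, X)) : Prop where
  mapsTo_C2 : MapsTo f C2 C1
  eq_on_C1 : ∀ x ∈ C1, ∀ y ∈ C1, f x = f y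

lemma fixedPoints_of_collar {g : C(X, X)} {W : ℝ → X} {τ₀ : ℝ} (hτ₀ : τ₀ ∈ Ioo 0 1)
    (hg_low : ∀ x, lev x ≤ 1 / 2 → g x ∈ C1)
    (hg_collar : ∀ x, 1 / 2 ≤ lev x → g x = W (2 * (1 - lev x)))
    (hW : ∀ τ ∈ Icc (0 : ℝ) 1, lev (W τ) = 1 - τ / 2 ↔ τ = 0 ∨ τ = τ₀) :
    {x | g x = x} ⊆ {W 0, W τ₀} ∧ {x | g x = x ∧ x ∉ Bd} = {W τ₀} := by
  have hfixed : ∀ x, g x = x → x = W 0 ∨ x = W τ₀ := by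
    intro x hx
    rcases le_total (lev x) (1 / 2) with hlev | hlev
    · linarith [mem_C1_iff.1 (hx ▸ hg_low x hlev)]
    · have hWx : W (2 * (1 - lev x)) = x := (hg_collar x hlev).symm.trans hx
      have hτ : 2 * (1 - lev x) ∈ Icc (0 : ℝ) 1 := ⟨by linarith [lev_le_one x], by linarith⟩
      have hlev' : lev (W (2 * (1 - lev x))) = 1 - 2 * (1 - lev x) / 2 := by rw [hWx]; ring
      exact ((hW _ hτ).1 hlev').imp (fun h => by rw [← h, hWx]) fun h => by rw [← h, hWx]
  have hlev_zero : lev (W 0) = 1 := by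
    rw [(hW 0 ⟨le_rfl, zero_le_one⟩).2 (Or.inl rfl)]; norm_num
  have hlev_τ₀ : lev (W τ₀) = 1 - τ₀ / 2 := (hW τ₀ ⟨hτ₀.1.le, hτ₀.2.le⟩).2 (Or.inr rfl)
  refine ⟨hfixed, Subset.antisymm ?_ (singleton_subset_iff.2 ⟨?_, ?_⟩)⟩
  · rintro x ⟨hx, hBd⟩
    exact (hfixed x hx).resolve_left fun h =>
      hBd (C1_subset_Bd (mem_C1_iff.2 (h ▸ hlev_zero)))
  · rw [hg_collar _ (by linarith [hτ₀.2]), hlev_τ₀]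
    ring_nf
  · rintro (h | h)
    · linarith [mem_C1_iff.1 h, hτ₀.1]
    · linarith [lev_le_of_mem_C2 h, hτ₀.2]

/-- The levels cut off by `squeeze` along the collar: full level at the two ends, with a dip to
`1/3` in the middle. -/
noncomputable def dip (τ : ℝ) : ℝ := max (1 / 3) |1 - 2 * τ|

@[fun_prop]
lemma continuous_dip : Continuous dip := by unfold dip; fun_prop

lemma one_le_dip_zero : 1 ≤ dip 0 := le_max_of_le_right (by norm_num)

lemma one_le_dip_one : 1 ≤ dip 1 := le_max_of_le_right (by norm_num)

-- On `τ ≤ 2/3` the cut-off lies below `1 - τ/2` except at `0`; beyond, `u τ` is at full level and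
-- the cut-off `2τ - 1` meets `1 - τ/2` only at `4/5`.
lemma lev_squeeze_dip_eq_iff {u : ℝ → X} (hu_zero : u 0 ∈ C1)
    (hu : ∀ τ, 2 / 3 ≤ τ → u τ ∈ C1) {τ : ℝ} (hτ : τ ∈ Icc (0 : ℝ) 1) :
    lev (squeeze (dip τ, u τ)) = 1 - τ / 2 ↔ τ = 0 ∨ τ = 4 / 5 := by
  obtain ⟨h0, h1⟩ := hτ
  have hdip : 1 / 3 ≤ dip τ := le_max_left _ _
  rw [lev_squeeze, max_eq_right hdip]
  constructor
  · intro h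
    have hle : 1 - τ / 2 ≤ dip τ := h ▸ min_le_left _ _
    rcases le_total τ (2 / 3) with hτ | hτ
    · left
      rw [dip, le_max_iff, le_abs] at hle
      rcases hle with hle | hle | hle <;> linarith
    · right
      have hdip : dip τ = 2 * τ - 1 := by
        rw [dip, abs_sub_comm, abs_of_nonneg (by linarith), max_eq_right (by linarith)]
      rw [mem_C1_iff.1 (hu τ hτ), hdip, min_eq_left (by linarith)] at h
      linarith
  · rintro (rfl | rfl)
    · rw [mem_C1_iff.1 hu_zero]; norm_num [dip]
    · rw [mem_C1_iff.1 (hu _ (by norm_num))]; norm_num [dip, abs_of_neg]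

/-- The homotopy inserting a family `K` of maps into the collar: at time `1`, the map `K s` is run
over `depth x = (s + 1) / 3`, and the levels are cut off by `dip`. -/
noncomputable def insertIntoCollar (K : C(ℝ × X, X)) : C(unitInterval × X, X) :=
  ⟨fun a => squeeze (max (dip (depth a.2)) (1 - a.1),
    K (a.1 * (3 * depth a.2 - 1), stretch (1, a.2))), by fun_prop⟩

section InsertIntoCollar

variable {K : C(ℝ × X, X)} {c : X}

lemma insertIntoCollar_zero (x : X) : insertIntoCollar K (0, x) = K (0, stretch (1, x)) := by
  refine (squeeze_of_one_le (le_max_of_le_right (by simp)) _).trans ?_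
  simp only [Icc.coe_zero, zero_mul]

lemma insertIntoCollar_of_mem_C1 (hKc : ∀ s ≤ 0, ∀ x ∈ C1, K (s, x) = c) (t : unitInterval) {x : X}
    (hx : x ∈ C1) : insertIntoCollar K (t, x) = c := by
  have ht : (t : ℝ) * (3 * 0 - 1) ≤ 0 := by
    linarith [t.2.1]
  simp only [insertIntoCollar, ContinuousMap.coe_mk, depth_of_mem_C1 hx,
    stretch_of_mem_Bd 1 (C1_subset_Bd hx), Icc.coe_zero]
  rw [squeeze_of_one_le (le_max_of_le_left one_le_dip_zero), hKc _ ht x hx]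

lemma insertIntoCollar_of_depth_eq_one (t : unitInterval) {x : X} (hx : depth x = 1) :
    insertIntoCollar K (t, x) = K (t * 2, stretch (1, x)) := by
  simp only [insertIntoCollar, ContinuousMap.coe_mk, hx, Icc.coe_one]
  rw [squeeze_of_one_le (le_max_of_le_left one_le_dip_one)]
  norm_num

lemma insertIntoCollar_one (x : X) : insertIntoCollar K (1, x) =
    squeeze (dip (depth x), K (3 * depth x - 1, stretch (1, x))) := by
  have h : (0 : ℝ) ≤ dip (depth x) := le_max_of_le_left (by norm_num)
  simp [insertIntoCollar, h]

lemma boundaryIntoC1_insertIntoCollar (hK : ∀ s, MapsTo (fun x => K (s, x)) C2 C1) (hc : c ∈ C1)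
    (hKc : ∀ s ≤ 0, ∀ x ∈ C1, K (s, x) = c) (t : unitInterval) :
    BoundaryIntoC1 ((insertIntoCollar K).curry t) := by
  rintro x (hx | hx)
  · exact (insertIntoCollar_of_mem_C1 hKc t hx).symm ▸ hc
  · rw [ContinuousMap.curry_apply, insertIntoCollar_of_depth_eq_one t (depth_of_mem_C2 hx),
      stretch_of_mem_Bd 1 (C2_subset_Bd hx)]
    exact hK _ hx

lemma fixedPoints_insertIntoCollar (hK : ∀ s, ∀ x ∈ C1, K (s, x) = K (s, c))
    (hK_neg : K (-1, c) ∈ C1) (hK_one : ∀ s, 1 ≤ s → ∀ x, K (s, x) ∈ C1) :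
    ∃ a b, {x | insertIntoCollar K (1, x) = x} ⊆ {a, b} ∧
      {x | insertIntoCollar K (1, x) = x ∧ x ∉ Bd} = {b} := by
  let W : ℝ → X := fun τ => squeeze (dip τ, K (3 * τ - 1, c))
  have hlow : ∀ x, lev x ≤ 1 / 2 → (insertIntoCollar K).curry 1 x ∈ C1 := fun x hx => by
    rw [ContinuousMap.curry_apply, insertIntoCollar_of_depth_eq_one 1 (depth_of_lev_le hx)]
    exact hK_one _ (by norm_num) _
  have hcollar : ∀ x, 1 / 2 ≤ lev x → (insertIntoCollar K).curry 1 x = W (2 * (1 - lev x)) :=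
    fun x hx => by
      rw [ContinuousMap.curry_apply, insertIntoCollar_one, coe_depth hx,
        hK _ _ (stretch_one_mem_C1 hx)]
  have hW : ∀ τ ∈ Icc (0 : ℝ) 1, lev (W τ) = 1 - τ / 2 ↔ τ = 0 ∨ τ = 4 / 5 := fun τ hτ =>
    lev_squeeze_dip_eq_iff (u := fun τ => K (3 * τ - 1, c)) (by norm_num [hK_neg])
      (fun τ hτ => hK_one _ (by linarith) _) hτ
  exact ⟨W 0, W (4 / 5), fixedPoints_of_collar (by norm_num) hlow hcollar hW⟩

end InsertIntoCollar

lemma homotopicWith_right {A B : Type*} [TopologicalSpace A] [TopologicalSpace B] {f g : C(A, B)}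
    {P : C(A, B) → Prop} (h : f.HomotopicWith g P) : P g :=
  h.elim fun F => F.curry_one ▸ F.prop 1

lemma exists_family_of_homotopicWith {A B : Type*} [TopologicalSpace A] [LocallyCompactSpace A]
    [TopologicalSpace B] {f g : C(A, B)} {P : C(A, B) → Prop} (h : f.HomotopicWith g P) :
    ∃ K : C(ℝ × A, B), (∀ s, P (K.curry s)) ∧
      (∀ s ≤ 0, ∀ x, K (s, x) = f x) ∧ ∀ s, 1 ≤ s → ∀ x, K (s, x) = g x :=
  h.elim fun F => ⟨F.extend.uncurry, F.extendProp, fun _ hs => F.extend_apply_of_le_zero hs,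
    fun _ hs => F.extend_apply_of_one_le hs⟩

lemma CollapsesC1.exists_homotopicWith_fixedPoints {f g₀ : C(X, X)}
    (hf : f.HomotopicWith g₀ CollapsesC1) (hg₀ : ∀ x, g₀ x ∈ C1) {c : X} (hc : c ∈ C1)
    (hfc : ∀ x ∈ C1, f x = c) :
    ∃ g : C(X, X), f.HomotopicWith g BoundaryIntoC1 ∧ ∃ a b : X,
      {x | g x = x} ⊆ {a, b} ∧ {x | g x = x ∧ x ∉ Bd} = {b} := by
  obtain ⟨K, hK, hK_zero, hK_one⟩ := exists_family_of_homotopicWith hf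
  have hKc : ∀ s ≤ 0, ∀ x ∈ C1, K (s, x) = c := fun s hs x hx =>
    (hK_zero s hs x).trans (hfc x hx)
  have hH : ∀ t, BoundaryIntoC1 ((insertIntoCollar K).curry t) :=
    boundaryIntoC1_insertIntoCollar (fun s => (hK s).mapsTo_C2) hc hKc
  have hf : BoundaryIntoC1 f := by
    rintro x (hx | hx)
    · exact (hfc x hx).symm ▸ hc
    · exact hK_zero 0 le_rfl x ▸ (hK 0).mapsTo_C2 hx
  refine ⟨(insertIntoCollar K).curry 1, hf.homotopicWith_comp_stretch.trans
    ⟨⟨⟨insertIntoCollar K, fun x => ?_, fun _ => rfl⟩, hH⟩⟩,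
    fixedPoints_insertIntoCollar (fun s x hx => (hK s).eq_on_C1 x hx c hc)
      ((hKc (-1) (by norm_num) c hc).symm ▸ hc) fun s hs x => (hK_one s hs x).symm ▸ hg₀ x⟩
  exact (insertIntoCollar_zero x).trans (hK_zero 0 le_rfl _)

/-! ### Radial deformations of the punctured square -/

/-- The homothety of ratio `s` centred at `(1/2, 0)`. -/
noncomputable def dilate (s : ℝ) (p : ℝ × ℝ) : ℝ × ℝ := (1 / 2 + s * (p.1 - 1 / 2), s * p.2)

@[fun_prop]
lemma continuous_dilate {T : Type*} [TopologicalSpace T] {s : T → ℝ} {p : T → ℝ × ℝ}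
    (hs : Continuous s) (hp : Continuous p) : Continuous fun t => dilate (s t) (p t) := by
  unfold dilate; fun_prop

@[simp]
lemma dilate_one (p : ℝ × ℝ) : dilate 1 p = p := by simp [dilate]

lemma innerGauge_dilate {s : ℝ} (hs : 0 ≤ s) (p : ℝ × ℝ) :
    innerGauge (dilate s p) = s * innerGauge p := by
  rw [innerGauge, innerGauge, mul_max_of_nonneg _ _ hs]
  simp only [dilate, add_sub_cancel_left, abs_mul, abs_of_nonneg hs]

lemma outerGauge_dilate {s : ℝ} (hs : 0 ≤ s) (p : ℝ × ℝ) :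
    outerGauge (dilate s p) = s * outerGauge p := by
  rw [outerGauge, outerGauge, mul_max_of_nonneg _ _ hs]
  simp only [dilate, add_sub_cancel_left, abs_mul, abs_of_nonneg hs, mul_left_comm]

lemma dilate_mem_PSq {s : ℝ} (hs : 0 ≤ s) {p : ℝ × ℝ} (h_outer : s * outerGauge p ≤ 1)
    (h_inner : 1 / 4 ≤ s * innerGauge p) : dilate s p ∈ PSq := by
  rw [mem_PSq, innerGauge_dilate hs, outerGauge_dilate hs]
  exact ⟨h_outer, h_inner⟩

lemma outerGauge_le_one (p : PSq) : outerGauge p ≤ 1 := (mem_PSq.1 p.2).1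

lemma le_innerGauge (p : PSq) : 1 / 4 ≤ innerGauge p := (mem_PSq.1 p.2).2

lemma innerGauge_pos (p : PSq) : 0 < innerGauge p := by linarith [le_innerGauge p]

lemma outerGauge_pos (p : PSq) : 0 < outerGauge p :=
  (innerGauge_pos p).trans_le (innerGauge_le_outerGauge p)

/-- The ratio by which a point is dilated at time `t` of the radial deformation onto the outer
boundary of the square. -/
noncomputable def expandRatio (t : ℝ) (p : ℝ × ℝ) : ℝ := 1 - t + t * (outerGauge p)⁻¹

lemma expandRatio_mul_outerGauge (t : ℝ) (p : PSq) :
    expandRatio t p * outerGauge p = (1 - t) * outerGauge p + t := by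
  rw [expandRatio, add_mul, inv_mul_cancel_right₀ (outerGauge_pos p).ne']

lemma one_le_expandRatio {t : ℝ} (ht : 0 ≤ t) (p : PSq) : 1 ≤ expandRatio t p := by
  have := mul_le_mul_of_nonneg_left (one_le_inv_iff₀.2 ⟨outerGauge_pos p, outerGauge_le_one p⟩) ht
  rw [expandRatio]
  linarith

lemma expandRatio_of_outerGauge_eq_one (t : ℝ) {p : ℝ × ℝ} (hp : outerGauge p = 1) :
    expandRatio t p = 1 := by
  rw [expandRatio, hp, inv_one, mul_one, sub_add_cancel]

lemma dilate_expandRatio_mem_PSq (t : unitInterval) (p : PSq) :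
    dilate (expandRatio t p) p ∈ PSq := by
  have h_one := one_le_expandRatio t.2.1 p
  refine dilate_mem_PSq (by linarith) ?_ ?_
  · rw [expandRatio_mul_outerGauge]
    linarith [mul_le_of_le_one_right (sub_nonneg.2 t.2.2) (outerGauge_le_one p)]
  · exact (le_innerGauge p).trans (le_mul_of_one_le_left (innerGauge_pos p).le h_one)

/-- The radial deformation of the punctured square onto the outer boundary of the square. -/
noncomputable def expandSq : C(unitInterval × PSq, PSq) where
  toFun a := ⟨dilate (expandRatio a.1 a.2) a.2, dilate_expandRatio_mem_PSq a.1 a.2⟩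
  continuous_toFun := by
    have h_ne : ∀ a : unitInterval × PSq, outerGauge a.2 ≠ 0 := fun a => (outerGauge_pos a.2).ne'
    unfold expandRatio
    fun_prop (disch := exact h_ne)

lemma expandSq_zero (p : PSq) : expandSq (0, p) = p :=
  Subtype.ext (by simp [expandSq, expandRatio])

lemma expandSq_of_outerGauge_eq_one (t : unitInterval) {p : PSq} (hp : outerGauge p = 1) :
    expandSq (t, p) = p :=
  Subtype.ext (by simp [expandSq, expandRatio_of_outerGauge_eq_one _ hp])

lemma outerGauge_expandSq_one (p : PSq) : outerGauge (expandSq (1, p)) = 1 := by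
  refine (outerGauge_dilate (zero_le_one.trans (one_le_expandRatio zero_le_one p)) _).trans ?_
  rw [expandRatio_mul_outerGauge]
  ring

lemma outerGauge_eq_one_of_fst {p : PSq} (hp : p.1.1 = 0 ∨ p.1.1 = 1) : outerGauge p = 1 := by
  refine (outerGauge_le_one p).antisymm (le_max_of_le_left ?_)
  rcases hp with hp | hp <;> norm_num [hp, abs_of_pos]

lemma outerGauge_eq_one_of_abs_snd {p : PSq} (hp : |p.1.2| = 1) : outerGauge p = 1 :=
  (outerGauge_le_one p).antisymm (le_max_of_le_right hp.ge)

/-- The deformation of `X` induced by the radial expansion of the punctured square. -/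
noncomputable def expand : C(unitInterval × X, X) :=
  descend (proj.comp expandSq) fun t p q hp hq h => by
    simp only [ContinuousMap.comp_apply,
      expandSq_of_outerGauge_eq_one t (outerGauge_eq_one_of_fst (Or.inl hp)),
      expandSq_of_outerGauge_eq_one t (outerGauge_eq_one_of_fst (Or.inr hq)),
      seamCompatible_proj p q hp hq h]

@[simp]
lemma expand_proj (t : unitInterval) (p : PSq) : expand (t, proj p) = proj (expandSq (t, p)) :=
  descend_apply _ _ t p

lemma expand_zero (x : X) : expand (0, x) = x := by
  obtain ⟨p, rfl⟩ := surjective_proj x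
  rw [expand_proj, expandSq_zero]

lemma expand_of_mem_C1 (t : unitInterval) {x : X} (hx : x ∈ C1) : expand (t, x) = x := by
  obtain ⟨p, rfl⟩ := surjective_proj x
  rw [mem_C1_iff, lev_proj] at hx
  rw [expand_proj, expandSq_of_outerGauge_eq_one t (outerGauge_eq_one_of_abs_snd hx)]

/-- The ratio by which a point is dilated at time `t` of the radial deformation starting from the
retraction onto the inner boundary circle. -/
noncomputable def contractRatio (t : ℝ) (p : ℝ × ℝ) : ℝ := (1 - t) * (4 * innerGauge p)⁻¹ + t

lemma contractRatio_mul_innerGauge (t : ℝ) (p : PSq) :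
    contractRatio t p * innerGauge p = (1 - t) / 4 + t * innerGauge p := by
  have := (innerGauge_pos p).ne'
  rw [contractRatio]
  field_simp

lemma contractRatio_mem_Icc {t : ℝ} (ht : t ∈ Icc 0 1) (p : PSq) :
    contractRatio t p ∈ Icc 0 1 := by
  have h_inv : (4 * innerGauge p)⁻¹ ∈ Icc (0 : ℝ) 1 :=
    ⟨(inv_pos.2 (mul_pos four_pos (innerGauge_pos p))).le,
      inv_le_one_of_one_le₀ (by linarith [le_innerGauge p])⟩
  simpa only [contractRatio, smul_eq_mul, mul_one] using
    convex_Icc (0 : ℝ) 1 h_inv ⟨zero_le_one, le_rfl⟩ (sub_nonneg.2 ht.2) ht.1 (sub_add_cancel 1 t)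

lemma dilate_contractRatio_mem_PSq (t : unitInterval) (p : PSq) :
    dilate (contractRatio t p) p ∈ PSq := by
  have h_ratio := contractRatio_mem_Icc t.2 p
  refine dilate_mem_PSq h_ratio.1 ?_ ?_
  · exact mul_le_one₀ h_ratio.2 (outerGauge_pos p).le (outerGauge_le_one p)
  · rw [contractRatio_mul_innerGauge]
    linarith [mul_le_mul_of_nonneg_left (le_innerGauge p) t.2.1]

/-- The radial deformation of the punctured square from the retraction onto the inner boundary
circle to the identity. -/
noncomputable def contractSq : C(unitInterval × PSq, PSq) where
  toFun a := ⟨dilate (contractRatio a.1 a.2) a.2, dilate_contractRatio_mem_PSq a.1 a.2⟩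
  continuous_toFun := by
    have h_ne : ∀ a : unitInterval × PSq, 4 * innerGauge a.2 ≠ 0 := fun a =>
      (mul_pos four_pos (innerGauge_pos a.2)).ne'
    unfold contractRatio
    fun_prop (disch := exact h_ne)

lemma contractSq_one (p : PSq) : contractSq (1, p) = p :=
  Subtype.ext (by simp [contractSq, contractRatio])

lemma innerGauge_contractSq_zero (p : PSq) : innerGauge (contractSq (0, p)) = 1 / 4 := by
  refine (innerGauge_dilate (contractRatio_mem_Icc (by simp) p).1 _).trans ?_
  rw [contractRatio_mul_innerGauge]
  norm_num

lemma contractSq_of_innerGauge_eq (t : unitInterval) {p : PSq} (hp : innerGauge p = 1 / 4) :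
    contractSq (t, p) = p :=
  Subtype.ext (by simp [contractSq, contractRatio, hp])

/-! ### Maps given on the edges of the square -/

/-- A family of maps, parametrised by `T`, on the four edges of the square, which respects the
corners and the identification of the left edge with the reversed right edge. The top and bottom
edges are parametrised by the first coordinate and the left edge by the second coordinate. -/
structure EdgeFamily (T Z : Type*) [TopologicalSpace T] [TopologicalSpace Z] where
  top : C(T × ℝ, Z)
  bottom : C(T × ℝ, Z)
  side : C(T × ℝ, Z)
  top_zero : ∀ t, top (t, 0) = side (t, 1)
  top_one : ∀ t, top (t, 1) = side (t, -1)
  bottom_zero : ∀ t, bottom (t, 0) = side (t, -1)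
  bottom_one : ∀ t, bottom (t, 1) = side (t, 1)

lemma rim_cases {q : ℝ × ℝ} (hq : outerGauge q = 1) :
    (q.1 = 0 ∨ q.1 = 1) ∨ (q.2 = 1 ∨ q.2 = -1) := by
  rcases max_choice (2 * |q.1 - 1 / 2|) |q.2| with h | h
  · have h_abs : |q.1 - 1 / 2| = 1 / 2 := by linarith [h.symm.trans hq]
    rcases eq_or_eq_neg_of_abs_eq h_abs with h_fst | h_fst
    · exact Or.inl (Or.inr (by linarith))
    · exact Or.inl (Or.inl (by linarith))
  · exact Or.inr (eq_or_eq_neg_of_abs_eq (h.symm.trans hq))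

namespace EdgeFamily

variable {T Z : Type*} [TopologicalSpace T] [TopologicalSpace Z] (e : EdgeFamily T Z)

open Classical in
/-- The value of a family of edge maps at a point of the outer boundary of the square. -/
noncomputable def rimValue (t : T) (q : ℝ × ℝ) : Z :=
  if q.2 = 1 then e.top (t, q.1) else if q.2 = -1 then e.bottom (t, q.1) else
    if q.1 = 0 then e.side (t, q.2) else e.side (t, -q.2)

lemma rimValue_of_snd_eq_one {q : ℝ × ℝ} (t : T) (hq : q.2 = 1) :
    e.rimValue t q = e.top (t, q.1) := if_pos hq

lemma rimValue_of_snd_eq_neg_one {q : ℝ × ℝ} (t : T) (hq : q.2 = -1) :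
    e.rimValue t q = e.bottom (t, q.1) := by
  rw [rimValue, if_neg (by rw [hq]; norm_num), if_pos hq]

lemma rimValue_of_fst_eq_zero {q : ℝ × ℝ} (t : T) (hq : q.1 = 0) :
    e.rimValue t q = e.side (t, q.2) := by
  by_cases h_top : q.2 = 1
  · rw [e.rimValue_of_snd_eq_one t h_top, hq, h_top, e.top_zero]
  by_cases h_bottom : q.2 = -1
  · rw [e.rimValue_of_snd_eq_neg_one t h_bottom, hq, h_bottom, e.bottom_zero]
  rw [rimValue, if_neg h_top, if_neg h_bottom, if_pos hq]

lemma rimValue_of_fst_eq_one {q : ℝ × ℝ} (t : T) (hq : q.1 = 1) :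
    e.rimValue t q = e.side (t, -q.2) := by
  by_cases h_top : q.2 = 1
  · rw [e.rimValue_of_snd_eq_one t h_top, hq, h_top, e.top_one]
  by_cases h_bottom : q.2 = -1
  · rw [e.rimValue_of_snd_eq_neg_one t h_bottom, hq, h_bottom, neg_neg, e.bottom_one]
  rw [rimValue, if_neg h_top, if_neg h_bottom, if_neg (by rw [hq]; norm_num)]

lemma continuousOn_rimValue : ContinuousOn (fun a : T × ℝ × ℝ => e.rimValue a.1 a.2)
    {a | outerGauge a.2 = 1} := by
  have h_left := isClosed_eq (f := fun a : T × ℝ × ℝ => a.2.1) (g := fun _ => 0)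
    (by fun_prop) (by fun_prop)
  have h_right := isClosed_eq (f := fun a : T × ℝ × ℝ => a.2.1) (g := fun _ => 1)
    (by fun_prop) (by fun_prop)
  have h_top := isClosed_eq (f := fun a : T × ℝ × ℝ => a.2.2) (g := fun _ => 1)
    (by fun_prop) (by fun_prop)
  have h_bottom := isClosed_eq (f := fun a : T × ℝ × ℝ => a.2.2) (g := fun _ => -1)
    (by fun_prop) (by fun_prop)
  refine (ContinuousOn.union_of_isClosed
    (ContinuousOn.union_of_isClosed ?_ ?_ h_left h_right)
    (ContinuousOn.union_of_isClosed ?_ ?_ h_top h_bottom)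
    (h_left.union h_right) (h_top.union h_bottom)).mono fun a ha => rim_cases ha
  · exact ContinuousOn.congr (f := fun a => e.side (a.1, a.2.2)) (by fun_prop)
      fun a ha => e.rimValue_of_fst_eq_zero a.1 ha
  · exact ContinuousOn.congr (f := fun a => e.side (a.1, -a.2.2)) (by fun_prop)
      fun a ha => e.rimValue_of_fst_eq_one a.1 ha
  · exact ContinuousOn.congr (f := fun a => e.top (a.1, a.2.1)) (by fun_prop)
      fun a ha => e.rimValue_of_snd_eq_one a.1 ha
  · exact ContinuousOn.congr (f := fun a => e.bottom (a.1, a.2.1)) (by fun_prop)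
      fun a ha => e.rimValue_of_snd_eq_neg_one a.1 ha

/-- The extension of a family of edge maps to the punctured square by the radial retraction. -/
noncomputable def toSqMap : C(T × PSq, Z) where
  toFun a := e.rimValue a.1 (expandSq (1, a.2))
  continuous_toFun := e.continuousOn_rimValue.comp_continuous
    (continuous_fst.prodMk (continuous_subtype_val.comp
      ((expandSq.curry 1).continuous.comp continuous_snd)))
    fun a => outerGauge_expandSq_one a.2

lemma toSqMap_apply (t : T) (p : PSq) :
    e.toSqMap (t, p) = e.rimValue t (expandSq (1, p)) := rfl

lemma seamCompatible_toSqMap (t : T) : SeamCompatible fun p => e.toSqMap (t, p) :=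
  fun p q hp hq h => by
    simp only [toSqMap_apply,
      expandSq_of_outerGauge_eq_one 1 (outerGauge_eq_one_of_fst (Or.inl hp)),
      expandSq_of_outerGauge_eq_one 1 (outerGauge_eq_one_of_fst (Or.inr hq)),
      e.rimValue_of_fst_eq_zero t hp, e.rimValue_of_fst_eq_one t hq, h]

/-- The map on `X` defined by a family of edge maps. -/
noncomputable def toMap : C(T × X, Z) := descend e.toSqMap e.seamCompatible_toSqMap

lemma toMap_proj (t : T) (p : PSq) :
    e.toMap (t, proj p) = e.rimValue t (expandSq (1, p)) := descend_apply _ _ t p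

end EdgeFamily

/-- The wedge of two circles, inside the torus. -/
def Rose : Set (UnitAddCircle × UnitAddCircle) := {q | q.1 = 0 ∨ q.2 = 0}

namespace Rose

variable {Z : Type*} [TopologicalSpace Z]

/-- The inclusion of the first circle. -/
def inl : C(UnitAddCircle, Rose) where
  toFun z := ⟨(z, 0), Or.inr rfl⟩

/-- The inclusion of the second circle. -/
def inr : C(UnitAddCircle, Rose) where
  toFun z := ⟨(0, z), Or.inl rfl⟩

open Classical in
lemma continuous_ite_snd {f g : C(UnitAddCircle, Z)} (h : f 0 = g 0) :
    Continuous fun q : Rose => if q.1.2 = 0 then f q.1.1 else g q.1.2 := by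
  have h_fst := isClosed_eq (f := fun q : Rose => q.1.1) (g := fun _ => 0)
    (by fun_prop) (by fun_prop)
  have h_snd := isClosed_eq (f := fun q : Rose => q.1.2) (g := fun _ => 0)
    (by fun_prop) (by fun_prop)
  refine continuousOn_univ.1 <| (ContinuousOn.union_of_isClosed ?_ ?_ h_fst h_snd).mono
    fun q _ => q.2
  · refine ContinuousOn.congr (f := fun q : Rose => g q.1.2) (by fun_prop) fun q hq => ?_
    rw [hq.out, h]
    exact ite_eq_right_iff.2 fun h_zero => by rw [h_zero]
  · exact ContinuousOn.congr (f := fun q : Rose => f q.1.1) (by fun_prop) fun q hq => if_pos hq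

open Classical in
/-- The map out of the wedge given by two maps on the circles that agree at the base point. -/
noncomputable def lift (f g : C(UnitAddCircle, Z)) (h : f 0 = g 0) : C(Rose, Z) where
  toFun q := if q.1.2 = 0 then f q.1.1 else g q.1.2
  continuous_toFun := continuous_ite_snd h

lemma lift_inl {f g : C(UnitAddCircle, Z)} (h : f 0 = g 0) (z : UnitAddCircle) :
    lift f g h (inl z) = f z := if_pos rfl

lemma lift_inr {f g : C(UnitAddCircle, Z)} (h : f 0 = g 0) (z : UnitAddCircle) :
    lift f g h (inr z) = g z := by
  by_cases hz : z = 0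
  · exact (if_pos hz).trans (h.trans (by rw [hz]))
  · exact if_neg hz

lemma inl_zero : inl 0 = inr 0 := rfl

lemma eq_inl_of_snd_eq_zero {q : Rose} (hq : q.1.2 = 0) : q = inl q.1.1 :=
  Subtype.ext (Prod.ext rfl hq)

end Rose

/-- The map on the circle defined by a loop. -/
noncomputable def circleMap {x : X} (γ : Path x x) : C(UnitAddCircle, X) where
  toFun := AddCircle.liftIco 1 0 γ.extend
  continuous_toFun := AddCircle.liftIco_zero_continuous (by simp) γ.continuous_extend.continuousOn

lemma circleMap_coe {x : X} (γ : Path x x) {t : ℝ} (ht : t ∈ Icc (0 : ℝ) 1) :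
    circleMap γ t = γ.extend t := by
  rcases ht.2.lt_or_eq with h_lt | rfl
  · exact AddCircle.liftIco_zero_coe_apply (f := γ.extend) ⟨ht.1, h_lt⟩
  · have h_zero : circleMap γ (0 : ℝ) = γ.extend 0 :=
      AddCircle.liftIco_zero_coe_apply (f := γ.extend) ⟨le_rfl, zero_lt_one⟩
    rw [AddCircle.coe_period, ← AddCircle.coe_zero, h_zero, γ.extend_zero, γ.extend_one]

/-! ### Homotopy equivalence with a wedge of circles -/

lemma outerGauge_le_two_mul_innerGauge (p : ℝ × ℝ) : outerGauge p ≤ 2 * innerGauge p := by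
  rw [innerGauge, mul_max_of_nonneg _ _ zero_le_two]
  exact max_le_max_left _ (by linarith [abs_nonneg p.2])

lemma mem_PSq_of_outerGauge_eq_one {p : ℝ × ℝ} (hp : outerGauge p = 1) : p ∈ PSq :=
  mem_PSq.2 ⟨hp.le, by linarith [outerGauge_le_two_mul_innerGauge p]⟩

lemma outerGauge_of_abs_snd_eq_one {x y : ℝ} (hx : x ∈ Icc (0 : ℝ) 1) (hy : |y| = 1) :
    outerGauge (x, y) = 1 := by
  have h_fst : |x - 1 / 2| ≤ 1 / 2 := abs_le.2 ⟨by linarith [hx.1], by linarith [hx.2]⟩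
  simp only [outerGauge, hy]
  exact max_eq_right (by linarith)

lemma outerGauge_zero_left {y : ℝ} (hy : |y| ≤ 1) : outerGauge (0, y) = 1 := by
  norm_num [outerGauge, abs_of_neg, hy]

lemma outerGauge_one_left {y : ℝ} (hy : |y| ≤ 1) : outerGauge (1, y) = 1 := by
  norm_num [outerGauge, abs_of_pos, hy]

/-- The image in `X` of the corners `(0, 1)` and `(1, -1)` of the square. -/
def cornerP : X := proj ⟨(0, 1), mem_PSq_of_outerGauge_eq_one (outerGauge_zero_left (by simp))⟩

/-- The image in `X` of the corners `(0, -1)` and `(1, 1)` of the square. -/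
def cornerQ : X := proj ⟨(0, -1), mem_PSq_of_outerGauge_eq_one (outerGauge_zero_left (by simp))⟩

/-- The image in `X` of the top edge of the square, from left to right. -/
def topPath : Path cornerP cornerQ where
  toFun x := proj
    ⟨(x, 1), mem_PSq_of_outerGauge_eq_one (outerGauge_of_abs_snd_eq_one x.2 abs_one)⟩
  source' := rfl
  target' := (seamCompatible_proj _ _ rfl rfl rfl).symm

/-- The image in `X` of the bottom edge of the square, from left to right. -/
def bottomPath : Path cornerQ cornerP where
  toFun x := proj
    ⟨(x, -1), mem_PSq_of_outerGauge_eq_one (outerGauge_of_abs_snd_eq_one x.2 (by simp))⟩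
  source' := rfl
  target' := (seamCompatible_proj _ _ rfl rfl (neg_neg _).symm).symm

lemma abs_one_sub_two_mul_le (t : unitInterval) : |1 - 2 * (t : ℝ)| ≤ 1 :=
  abs_le.2 ⟨by linarith [t.2.2], by linarith [t.2.1]⟩

/-- The image in `X` of the left edge of the square, from top to bottom. -/
def sidePath : Path cornerP cornerQ where
  toFun t := proj ⟨(0, 1 - 2 * t),
    mem_PSq_of_outerGauge_eq_one (outerGauge_zero_left (abs_one_sub_two_mul_le t))⟩
  source' := congrArg proj (Subtype.ext (by norm_num))
  target' := congrArg proj (Subtype.ext (by norm_num))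

lemma topPath_extend {p : PSq} (hp : p.1.2 = 1) : topPath.extend p.1.1 = proj p :=
  (topPath.extend_apply (fst_mem_Icc p)).trans (congrArg proj (Subtype.ext (Prod.ext rfl hp.symm)))

lemma bottomPath_extend {p : PSq} (hp : p.1.2 = -1) : bottomPath.extend p.1.1 = proj p :=
  (bottomPath.extend_apply (fst_mem_Icc p)).trans
    (congrArg proj (Subtype.ext (Prod.ext rfl hp.symm)))

lemma half_one_sub_snd_mem_Icc (p : PSq) : (1 - p.1.2) / 2 ∈ Icc (0 : ℝ) 1 := by
  have := abs_le.1 (abs_snd_le_one p)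
  constructor <;> linarith

lemma sidePath_extend {p : PSq} (hp : p.1.1 = 0) : sidePath.extend ((1 - p.1.2) / 2) = proj p :=
  (sidePath.extend_apply (half_one_sub_snd_mem_Icc p)).trans <|
    congrArg proj (Subtype.ext (Prod.ext hp.symm (by simp only; ring)))

lemma mem_C1_of_mem_range_extend {P Q x : X} {γ : Path P Q} (hγ : range γ ⊆ C1)
    (hx : x ∈ range γ.extend) : x ∈ C1 := hγ (γ.extend_range ▸ hx)

lemma range_topPath_subset : range topPath ⊆ C1 := by
  rintro _ ⟨x, rfl⟩
  exact mem_C1_iff.2 ((lev_proj _).trans abs_one)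

lemma range_bottomPath_subset : range bottomPath ⊆ C1 := by
  rintro _ ⟨x, rfl⟩
  exact mem_C1_iff.2 ((lev_proj _).trans (by simp))

lemma boundaryLoop_mem_C1 (t : ℝ) : (topPath.trans bottomPath).extend t ∈ C1 := by
  refine mem_C1_of_mem_range_extend ?_ (mem_range_self t)
  rw [Path.trans_range]
  exact union_subset range_topPath_subset range_bottomPath_subset

/-- The edge maps to the wedge of circles which collapse the bottom edge and wrap the top edge
around the first circle and the left edge around the second. -/
noncomputable def collapseEdges : EdgeFamily Unit Rose where
  top := ⟨fun a => Rose.inl a.2, by fun_prop⟩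
  bottom := ⟨fun _ => Rose.inl 0, by fun_prop⟩
  side := ⟨fun a => Rose.inr ((1 - a.2) / 2 : ℝ), by fun_prop⟩
  top_zero _ := by norm_num [Rose.inl_zero]
  top_one _ := by norm_num [AddCircle.coe_period, Rose.inl_zero]
  bottom_zero _ := by norm_num [AddCircle.coe_period, Rose.inl_zero]
  bottom_one _ := by norm_num [Rose.inl_zero]

/-- A homotopy equivalence from `X` to the wedge of circles. -/
noncomputable def collapse : C(X, Rose) := collapseEdges.toMap.curry ()

/-- The homotopy inverse of `collapse`, whose restriction to the first circle winds around `C1`. -/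
noncomputable def spine : C(Rose, X) :=
  Rose.lift (circleMap (topPath.trans bottomPath)) (circleMap (sidePath.trans bottomPath)) <| by
    rw [← AddCircle.coe_zero, circleMap_coe _ ⟨le_rfl, zero_le_one⟩,
      circleMap_coe _ ⟨le_rfl, zero_le_one⟩, Path.extend_zero, Path.extend_zero]

lemma spine_inl {t : ℝ} (ht : t ∈ Icc (0 : ℝ) 1) :
    spine (Rose.inl t) = (topPath.trans bottomPath).extend t :=
  (Rose.lift_inl _ _).trans (circleMap_coe _ ht)

lemma spine_inr {t : ℝ} (ht : t ∈ Icc (0 : ℝ) 1) :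
    spine (Rose.inr t) = (sidePath.trans bottomPath).extend t :=
  (Rose.lift_inr _ _).trans (circleMap_coe _ ht)

lemma spine_inl_mem_C1 (z : UnitAddCircle) : spine (Rose.inl z) ∈ C1 := by
  obtain ⟨t, ht, rfl⟩ : z ∈ ((↑) : ℝ → UnitAddCircle) '' Ico 0 (0 + 1) :=
    (AddCircle.coe_image_Ico_eq (1 : ℝ) 0).ge (mem_univ z)
  rw [spine_inl ⟨ht.1, by linarith [ht.2]⟩]
  exact boundaryLoop_mem_C1 t

lemma collapse_mem_C1 {x : X} (hx : x ∈ C1) : (collapse x).1.2 = 0 := by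
  obtain ⟨p, rfl⟩ := surjective_proj x
  rw [mem_C1_iff, lev_proj] at hx
  refine (congrArg (fun q : Rose => q.1.2) (collapseEdges.toMap_proj () p)).trans ?_
  rw [expandSq_of_outerGauge_eq_one 1 (outerGauge_eq_one_of_abs_snd hx)]
  rcases eq_or_eq_neg_of_abs_eq hx with h | h
  · rw [collapseEdges.rimValue_of_snd_eq_one () h]
    rfl
  · rw [collapseEdges.rimValue_of_snd_eq_neg_one () h]
    rfl

/-- The homotopy of edge maps which slides the end points of the edges along the bottom edge. -/
noncomputable def slideEdges : EdgeFamily unitInterval X where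
  top := ⟨fun a => (topPath.trans bottomPath).extend ((1 + a.1) * a.2 / 2), by fun_prop⟩
  bottom := ⟨fun a => bottomPath.extend (a.1 + (1 - a.1) * a.2), by fun_prop⟩
  side := ⟨fun a => (sidePath.trans bottomPath).extend ((1 + a.1) * (1 - a.2) / 4), by fun_prop⟩
  top_zero t := by norm_num
  top_one t := by
    simp only [ContinuousMap.coe_mk]
    rw [Path.extend_trans_of_half_le _ _ (by linarith [t.2.1]),
      Path.extend_trans_of_half_le _ _ (by linarith [t.2.1])]
    congr 1
    ring
  bottom_zero t := by
    simp only [ContinuousMap.coe_mk]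
    rw [Path.extend_trans_of_half_le _ _ (by linarith [t.2.1])]
    congr 1
    ring
  bottom_one t := by norm_num

lemma slideEdges_rimValue_zero {p : PSq} (hp : outerGauge p = 1) :
    slideEdges.rimValue 0 p = proj p := by
  have h_side : ∀ p : PSq, p.1.1 = 0 → slideEdges.side (0, p.1.2) = proj p := fun p hp => by
    have h_Icc := half_one_sub_snd_mem_Icc p
    simp only [slideEdges, ContinuousMap.coe_mk, Icc.coe_zero]
    rw [Path.extend_trans_of_le_half _ _ (by linarith [h_Icc.2]), ← sidePath_extend hp]
    congr 1
    ring
  rcases rim_cases hp with (h | h) | (h | h)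
  · rw [slideEdges.rimValue_of_fst_eq_zero 0 h, h_side p h]
  · have h_neg : outerGauge (0, -p.1.2) = 1 :=
      outerGauge_zero_left ((abs_neg _).trans_le (abs_snd_le_one p))
    rw [slideEdges.rimValue_of_fst_eq_one 0 h,
      h_side ⟨(0, -p.1.2), mem_PSq_of_outerGauge_eq_one h_neg⟩ rfl]
    exact seamCompatible_proj _ _ rfl h rfl
  · rw [slideEdges.rimValue_of_snd_eq_one 0 h, ← topPath_extend h]
    simp only [slideEdges, ContinuousMap.coe_mk, Icc.coe_zero]
    rw [Path.extend_trans_of_le_half _ _ (by linarith [(fst_mem_Icc p).2])]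
    congr 1
    ring
  · rw [slideEdges.rimValue_of_snd_eq_neg_one 0 h, ← bottomPath_extend h]
    simp only [slideEdges, ContinuousMap.coe_mk, Icc.coe_zero]
    congr 1
    ring

lemma slideEdges_rimValue_one {p : PSq} (hp : outerGauge p = 1) :
    slideEdges.rimValue 1 p = spine (collapseEdges.rimValue () p) := by
  have h_side : ∀ y ∈ Icc (-1 : ℝ) 1,
      slideEdges.side (1, y) = spine (collapseEdges.side ((), y)) := fun y hy => by
    refine Eq.trans ?_ (spine_inr ⟨by linarith [hy.2], by linarith [hy.1]⟩).symm
    simp only [slideEdges, ContinuousMap.coe_mk, Icc.coe_one]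
    congr 1
    ring
  have h_snd := abs_le.1 (abs_snd_le_one p)
  rcases rim_cases hp with (h | h) | (h | h)
  · rw [slideEdges.rimValue_of_fst_eq_zero 1 h, collapseEdges.rimValue_of_fst_eq_zero () h,
      h_side _ h_snd]
  · rw [slideEdges.rimValue_of_fst_eq_one 1 h, collapseEdges.rimValue_of_fst_eq_one () h,
      h_side _ ⟨by linarith [h_snd.2], by linarith [h_snd.1]⟩]
  · rw [slideEdges.rimValue_of_snd_eq_one 1 h, collapseEdges.rimValue_of_snd_eq_one () h]
    refine Eq.trans ?_ (spine_inl (fst_mem_Icc p)).symm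
    simp only [slideEdges, ContinuousMap.coe_mk, Icc.coe_one]
    congr 1
    ring
  · rw [slideEdges.rimValue_of_snd_eq_neg_one 1 h, collapseEdges.rimValue_of_snd_eq_neg_one () h]
    refine Eq.trans ?_ (spine_inl ⟨le_rfl, zero_le_one⟩).symm
    simp [slideEdges]

lemma mapsTo_C1_slideEdges_toMap (t : unitInterval) :
    MapsTo (fun x => slideEdges.toMap (t, x)) C1 C1 := by
  intro x hx
  obtain ⟨p, rfl⟩ := surjective_proj x
  rw [mem_C1_iff, lev_proj] at hx
  simp only
  rw [slideEdges.toMap_proj,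
    expandSq_of_outerGauge_eq_one 1 (outerGauge_eq_one_of_abs_snd hx)]
  rcases eq_or_eq_neg_of_abs_eq hx with h | h
  · rw [slideEdges.rimValue_of_snd_eq_one t h]
    exact boundaryLoop_mem_C1 _
  · rw [slideEdges.rimValue_of_snd_eq_neg_one t h]
    exact mem_C1_of_mem_range_extend range_bottomPath_subset (mem_range_self _)

lemma homotopicWith_spine_comp_collapse :
    (ContinuousMap.id X).HomotopicWith (spine.comp collapse) fun k => MapsTo k C1 C1 := by
  refine .trans (g := expand.curry 1) ⟨?_⟩ ⟨?_⟩
  · exact { toContinuousMap := expand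
            map_zero_left := expand_zero
            map_one_left := fun _ => rfl
            prop' := fun t x hx => (expand_of_mem_C1 t hx).symm ▸ hx }
  · refine { toContinuousMap := slideEdges.toMap
             map_zero_left := fun x => ?_
             map_one_left := fun x => ?_
             prop' := mapsTo_C1_slideEdges_toMap } <;> obtain ⟨p, rfl⟩ := surjective_proj x
    · exact (slideEdges.toMap_proj 0 p).trans <|
        (slideEdges_rimValue_zero (outerGauge_expandSq_one p)).trans (expand_proj 1 p).symm
    · exact (slideEdges.toMap_proj 1 p).trans <|
        (slideEdges_rimValue_one (outerGauge_expandSq_one p)).trans <|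
          congrArg spine (collapseEdges.toMap_proj () p).symm

/-! ### Coverings of the wedge of circles -/

section CircleCoord

open scoped Topology

/-- The representative of a point of the circle in `[a, a + 1)`. -/
noncomputable def circleCoord (a : ℝ) (z : UnitAddCircle) : ℝ := AddCircle.equivIco 1 a z

lemma circleCoord_mem (a : ℝ) (z : UnitAddCircle) : circleCoord a z ∈ Ico a (a + 1) :=
  (AddCircle.equivIco 1 a z).2

lemma coe_circleCoord (a : ℝ) (z : UnitAddCircle) : (circleCoord a z : UnitAddCircle) = z :=
  AddCircle.coe_equivIco

lemma circleCoord_coe {a t : ℝ} (ht : t ∈ Ico a (a + 1)) :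
    circleCoord a (t : UnitAddCircle) = t :=
  AddCircle.equivIco_coe_of_mem ht

lemma circleCoord_zero {a : ℝ} (ha : 0 ∈ Ico a (a + 1)) : circleCoord a 0 = 0 := by
  rw [← AddCircle.coe_zero, circleCoord_coe ha]

lemma continuousAt_circleCoord {a : ℝ} {z : UnitAddCircle} (hz : z ≠ a) :
    ContinuousAt (circleCoord a) z :=
  continuous_subtype_val.continuousAt.comp (AddCircle.continuousAt_equivIco 1 a hz)

lemma circleCoord_ne_zero (a : ℝ) {z : UnitAddCircle} (hz : z ≠ 0) : circleCoord a z ≠ 0 :=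
  fun h => hz (by rw [← coe_circleCoord a z, h, AddCircle.coe_zero])

lemma circleCoord_zero_of_neg {z : UnitAddCircle} (hz : circleCoord (-1 / 2) z < 0) :
    circleCoord 0 z = circleCoord (-1 / 2) z + 1 := by
  conv_lhs => rw [← coe_circleCoord (-1 / 2) z, ← AddCircle.coe_add_period]
  exact circleCoord_coe ⟨by linarith [(circleCoord_mem (-1 / 2) z).1], by linarith⟩

lemma circleCoord_zero_of_nonneg {z : UnitAddCircle} (hz : 0 ≤ circleCoord (-1 / 2) z) :
    circleCoord 0 z = circleCoord (-1 / 2) z := by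
  conv_lhs => rw [← coe_circleCoord (-1 / 2) z]
  exact circleCoord_coe ⟨hz, by linarith [(circleCoord_mem (-1 / 2) z).2]⟩

lemma circleCoord_neg_half_zero : circleCoord (-1 / 2) 0 = 0 :=
  circleCoord_zero ⟨by norm_num, by norm_num⟩

lemma circleCoord_zero_zero : circleCoord 0 0 = 0 := circleCoord_zero ⟨by norm_num, by norm_num⟩

lemma zero_ne_coe_neg_half : (0 : UnitAddCircle) ≠ ((-1 / 2 : ℝ) : UnitAddCircle) := fun h => by
  have h_coe : circleCoord (-1 / 2) ((-1 / 2 : ℝ) : UnitAddCircle) = -1 / 2 :=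
    circleCoord_coe ⟨le_rfl, by norm_num⟩
  rw [← h, circleCoord_neg_half_zero] at h_coe
  norm_num at h_coe

lemma eventually_circleCoord_neg_iff {z : UnitAddCircle} (h_zero : z ≠ 0)
    (h_half : z ≠ ((-1 / 2 : ℝ) : UnitAddCircle)) :
    ∀ᶠ w in 𝓝 z, (circleCoord (-1 / 2) w < 0 ↔ circleCoord (-1 / 2) z < 0) := by
  have h_cont := continuousAt_circleCoord h_half
  rcases (circleCoord_ne_zero (-1 / 2) h_zero).lt_or_gt with h | h
  · filter_upwards [h_cont.eventually_lt_const h] with w hw using iff_of_true hw h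
  · filter_upwards [h_cont.eventually_const_lt h] with w hw using iff_of_false hw.not_gt h.not_gt

end CircleCoord

namespace Rose

open scoped Topology

/-- The coordinate of the wedge along the circle labelled by `g`; the first circle has label
`false`. -/
def coord : Bool → C(Rose, UnitAddCircle)
  | false => ⟨fun q => q.1.1, by fun_prop⟩
  | true => ⟨fun q => q.1.2, by fun_prop⟩

lemma coord_eq_zero_of_ne {g h : Bool} (hgh : g ≠ h) {q : Rose} (hq : coord g q ≠ 0) :
    coord h q = 0 := by
  cases g <;> cases h
  · exact absurd rfl hgh
  · exact q.2.resolve_left hq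
  · exact q.2.resolve_right hq
  · exact absurd rfl hgh

lemma eventually_coord_eq_zero_of_ne {g h : Bool} (hgh : g ≠ h) {q : Rose} (hq : coord g q ≠ 0) :
    ∀ᶠ r in 𝓝 q, coord h r = 0 :=
  ((coord g).continuous.continuousAt.eventually_ne hq).mono fun _ => coord_eq_zero_of_ne hgh

/-- The two open sets over which the coverings of the wedge are trivialized: the complement of the
base point (`true`) and the complement of the two antipodes of the base point (`false`). -/
def chart : Bool → Set Rose
  | true => {q | ∃ g, coord g q ≠ 0}
  | false => {q | ∀ g, coord g q ≠ ((-1 / 2 : ℝ) : UnitAddCircle)}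

lemma isOpen_chart (i : Bool) : IsOpen (chart i) := by
  cases i
  · simp only [chart, ofPred_forall]
    exact isOpen_iInter_of_finite fun g => isOpen_ne.preimage (coord g).continuous
  · simp only [chart, ofPred_exists]
    exact isOpen_iUnion fun g => isOpen_ne.preimage (coord g).continuous

open Classical in
/-- A chart containing `q`; away from the base point it is the complement of the base point. -/
noncomputable def chartAt (q : Rose) : Bool := decide (∃ g, coord g q ≠ 0)

lemma mem_chart_chartAt (q : Rose) : q ∈ chart (chartAt q) := by
  by_cases h : ∃ g, coord g q ≠ 0
  · rwa [chartAt, decide_eq_true h]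
  · rw [chartAt, decide_eq_false h]
    push Not at h
    intro g
    rw [h g]
    exact zero_ne_coe_neg_half

/-- The change of trivialization from the fibre coordinate over the complement of the base point to
the one over `chart i`. Near the end of the circle labelled by `g`, the sheet over that circle is
the one starting at its endpoint, which is its image under the generator `g`. -/
noncomputable def gauge (i : Bool) (q : Rose) : FreeGroup Bool :=
  if i then 1
  else if circleCoord (-1 / 2) (coord false q) < 0 then .of false
  else if circleCoord (-1 / 2) (coord true q) < 0 then .of true
  else 1

lemma gauge_true (q : Rose) : gauge true q = 1 := if_pos rfl

lemma gauge_false_eq_or (q : Rose) :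
    (gauge false q = 1 ∧ ∀ g, 0 ≤ circleCoord (-1 / 2) (coord g q)) ∨
      ∃ g, gauge false q = .of g ∧ circleCoord (-1 / 2) (coord g q) < 0 ∧
        ∀ h, g ≠ h → coord h q = 0 := by
  have h_single {g : Bool} (hg : circleCoord (-1 / 2) (coord g q) < 0) :
      ∀ h, g ≠ h → coord h q = 0 := fun h hgh => coord_eq_zero_of_ne hgh fun h_zero => by
    rw [h_zero, circleCoord_neg_half_zero] at hg
    exact hg.false
  by_cases h₁ : circleCoord (-1 / 2) (coord false q) < 0
  · exact .inr ⟨false, by simp [gauge, h₁], h₁, h_single h₁⟩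
  by_cases h₂ : circleCoord (-1 / 2) (coord true q) < 0
  · exact .inr ⟨true, by simp [gauge, h₁, h₂], h₂, h_single h₂⟩
  · exact .inl ⟨by simp [gauge, h₁, h₂], Bool.rec (not_lt.1 h₁) (not_lt.1 h₂)⟩

lemma gauge_chartAt (q : Rose) : gauge (chartAt q) q = 1 := by
  by_cases h : ∃ g, coord g q ≠ 0
  · rw [chartAt, decide_eq_true h, gauge_true]
  · rw [chartAt, decide_eq_false h]
    push Not at h
    simp [gauge, h, circleCoord_neg_half_zero]

lemma eventually_gauge_false_eq {q : Rose} (h₀ : q ∈ chart false) (h₁ : q ∈ chart true) :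
    ∀ᶠ r in 𝓝 q, gauge false r = gauge false q := by
  obtain ⟨g, hg⟩ := h₁
  have h_sign := (coord g).continuous.continuousAt.eventually
    (eventually_circleCoord_neg_iff hg (h₀ g))
  have h_zero := eventually_coord_eq_zero_of_ne (h := !g) (by simp) hg
  filter_upwards [h_sign, h_zero] with r hr_sign hr_zero
  have hq_zero := h_zero.self_of_nhds
  cases g <;> simp only [Bool.not_false, Bool.not_true] at hr_zero hq_zero <;>
    simp [gauge, hr_sign, hr_zero, hq_zero, circleCoord_neg_half_zero]

lemma eventually_gauge_mul_inv_eq (i j : Bool) {q : Rose} (hi : q ∈ chart i) (hj : q ∈ chart j) :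
    ∀ᶠ r in 𝓝 q, gauge j r * (gauge i r)⁻¹ = gauge j q * (gauge i q)⁻¹ := by
  cases i <;> cases j
  · simp
  · filter_upwards [eventually_gauge_false_eq hi hj] with r hr
    rw [hr, gauge_true, gauge_true]
  · filter_upwards [eventually_gauge_false_eq hj hi] with r hr
    rw [hr, gauge_true, gauge_true]
  · simp [gauge_true]

variable (V : Type*) [TopologicalSpace V] [DiscreteTopology V] [MulAction (FreeGroup Bool) V]

/-- The gluing data of the covering of the wedge with monodromy action `V`. -/
noncomputable def coveringCore : FiberBundleCore Bool Rose V where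
  baseSet := chart
  isOpen_baseSet := isOpen_chart
  indexAt := chartAt
  mem_baseSet_at := mem_chart_chartAt
  coordChange i j q v := (gauge j q * (gauge i q)⁻¹) • v
  coordChange_self i q _ v := by rw [mul_inv_cancel, one_smul]
  continuousOn_coordChange i j := by
    rintro ⟨q, v⟩ ⟨⟨hi, hj⟩, -⟩
    refine (ContinuousAt.congr (f := fun _ => (gauge j q * (gauge i q)⁻¹) • v)
      continuousAt_const ?_).continuousWithinAt
    rw [nhds_prod_eq, nhds_discrete V, Filter.prod_pure]
    exact Filter.eventually_map.2 <|
      (eventually_gauge_mul_inv_eq i j hi hj).mono fun r hr => by simp only [hr]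
  coordChange_comp i j k q _ v := by
    rw [smul_smul]
    congr 1
    group

/-- The covering space of the wedge with monodromy action `V`: its vertices are the elements
of `V`, and an edge labelled by `g` joins `v` to `g • v`. -/
abbrev Cover := Bundle.TotalSpace V (coveringCore V).Fiber

namespace Cover

variable {V}

/-- The fibre coordinate over the complement of the base point, that is, the starting vertex of the
half-open edge containing a point. -/
def vertex (p : Cover V) : V := p.2

lemma ext_of_vertex {p p' : Cover V} (h_proj : p.proj = p'.proj) (h_vertex : p.vertex = p'.vertex) :
    p = p' :=
  Bundle.TotalSpace.ext h_proj (heq_of_eq h_vertex)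

lemma isCoveringMap_proj : IsCoveringMap (Bundle.TotalSpace.proj : Cover V → Rose) :=
  FiberBundle.isCoveringMap (F := V) (E := (coveringCore V).Fiber)

lemma localTriv_apply (i : Bool) (p : Cover V) :
    (coveringCore V).localTriv i p = (p.proj, gauge i p.proj • p.vertex) := by
  rw [FiberBundleCore.localTriv_apply]
  change (p.proj, (gauge i p.proj * (gauge (chartAt p.proj) p.proj)⁻¹) • p.vertex) = _
  rw [gauge_chartAt, inv_one, mul_one]

lemma eventually_gauge_smul_vertex_eq {i : Bool} {p : Cover V} (hp : p.proj ∈ chart i) :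
    ∀ᶠ p' in 𝓝 p, gauge i p'.proj • p'.vertex = gauge i p.proj • p.vertex := by
  have h_cont : ContinuousAt (fun p' => ((coveringCore V).localTriv i p').2) p :=
    (((coveringCore V).localTriv i).continuousAt
      (((coveringCore V).mem_localTriv_source i p).2 hp)).snd
  simp only [localTriv_apply] at h_cont
  rwa [ContinuousAt, nhds_discrete V, Filter.tendsto_pure] at h_cont

lemma continuous_of_charts {Z : Type*} [TopologicalSpace Z] {f : Cover V → Z}
    (F : Bool → Rose → V → Z) (hF : ∀ i v, ∀ q ∈ chart i, ContinuousAt (F i · v) q)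
    (hf : ∀ i, ∀ p : Cover V, p.proj ∈ chart i → f p = F i p.proj (gauge i p.proj • p.vertex)) :
    Continuous f := by
  refine continuous_iff_continuousAt.2 fun p => ?_
  have hp := mem_chart_chartAt p.proj
  have h_proj := (isCoveringMap_proj (V := V)).continuous.continuousAt (x := p)
  refine (ContinuousAt.comp (g := (F (chartAt p.proj) · (gauge (chartAt p.proj) p.proj • p.vertex)))
    (hF _ _ _ hp) h_proj).congr ?_
  filter_upwards [eventually_gauge_smul_vertex_eq hp,
    h_proj.eventually ((isOpen_chart _).mem_nhds hp)] with p' h_vertex h_chart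
  rw [hf _ _ h_chart, h_vertex]
  rfl

end Cover

end Rose

namespace Rose

lemma continuousAt_circleCoord_coord {g : Bool} {q : Rose} (hq : q ∈ chart true) :
    ContinuousAt (fun r => circleCoord 0 (coord g r)) q := by
  by_cases hg : coord g q = 0
  · obtain ⟨h, hh⟩ := hq
    refine ContinuousAt.congr (f := fun _ => circleCoord 0 (coord g q)) continuousAt_const ?_
    filter_upwards [eventually_coord_eq_zero_of_ne (h := g) (by rintro rfl; exact hh hg) hh]
      with r hr
    rw [hr, hg]
  · exact ContinuousAt.comp (g := circleCoord 0)
      (continuousAt_circleCoord (by rwa [AddCircle.coe_zero])) (coord g).continuous.continuousAt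

variable {V : Type*} [MulAction (FreeGroup Bool) V]

/-- The function on the star of the vertex `v` in the covering that is affine on its edges with
values `ψ`, in the coordinates of the chart around the base point. -/
noncomputable def starInterpolate (ψ : V → ℝ) (q : Rose) (v : V) : ℝ :=
  ψ v + ∑ g,
    (max (circleCoord (-1 / 2) (coord g q)) 0 * (ψ (FreeGroup.of g • v) - ψ v) +
      max (-circleCoord (-1 / 2) (coord g q)) 0 * (ψ ((FreeGroup.of g)⁻¹ • v) - ψ v))

lemma continuousAt_starInterpolate (ψ : V → ℝ) (v : V) {q : Rose} (hq : q ∈ chart false) :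
    ContinuousAt (starInterpolate ψ · v) q := by
  have h_coord (g : Bool) : ContinuousAt (fun r => circleCoord (-1 / 2) (coord g r)) q :=
    ContinuousAt.comp (g := circleCoord (-1 / 2)) (continuousAt_circleCoord (hq g))
      (coord g).continuous.continuousAt
  unfold starInterpolate
  fun_prop

lemma gauge_smul_eq_iff {v₀ : V} (h₀ : FreeGroup.of false • v₀ = v₀) (i : Bool) {q : Rose}
    (hq : coord true q = 0) (v : V) : gauge i q • v = v₀ ↔ v = v₀ := by
  suffices gauge i q • v₀ = v₀ from ⟨fun h => smul_left_cancel _ (h.trans this.symm),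
    fun h => h ▸ this⟩
  cases i
  · rcases gauge_false_eq_or q with ⟨h, -⟩ | ⟨_ | _, h, h_neg, -⟩
    · rw [h, one_smul]
    · rw [h, h₀]
    · rw [hq, circleCoord_neg_half_zero] at h_neg
      exact absurd h_neg (lt_irrefl 0)
  · rw [gauge_true, one_smul]

namespace Cover

variable [TopologicalSpace V] [DiscreteTopology V]

/-- The extension of a function on the vertices to the covering, affine along each edge. -/
noncomputable def interpolate (ψ : V → ℝ) (p : Cover V) : ℝ :=
  ψ p.vertex +
    ∑ g, circleCoord 0 (coord g p.proj) * (ψ (FreeGroup.of g • p.vertex) - ψ p.vertex)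

lemma interpolate_of_coord_eq_zero {ψ : V → ℝ} {p : Cover V} {g : Bool}
    (hp : ∀ h, g ≠ h → coord h p.proj = 0) :
    interpolate ψ p = ψ p.vertex +
      circleCoord 0 (coord g p.proj) * (ψ (FreeGroup.of g • p.vertex) - ψ p.vertex) := by
  rw [interpolate, Fintype.sum_eq_single g fun h hgh => by
    rw [hp h hgh.symm, circleCoord_zero_zero, zero_mul]]

lemma interpolate_eq_starInterpolate (ψ : V → ℝ) (p : Cover V) :
    interpolate ψ p = starInterpolate ψ p.proj (gauge false p.proj • p.vertex) := by
  rcases gauge_false_eq_or p.proj with ⟨h_gauge, h_nonneg⟩ | ⟨g, h_gauge, h_neg, h_zero⟩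
  · simp only [interpolate, starInterpolate, h_gauge, one_smul,
      circleCoord_zero_of_nonneg (h_nonneg _), max_eq_left (h_nonneg _),
      max_eq_right (neg_nonpos.2 (h_nonneg _)), zero_mul, add_zero]
  · rw [interpolate_of_coord_eq_zero h_zero, starInterpolate, h_gauge,
      Fintype.sum_eq_single g fun h hgh => by
        simp [h_zero h hgh.symm, circleCoord_neg_half_zero],
      inv_smul_smul, circleCoord_zero_of_neg h_neg, max_eq_right h_neg.le,
      max_eq_left (neg_nonneg.2 h_neg.le)]
    ring

lemma continuous_interpolate (ψ : V → ℝ) : Continuous (interpolate ψ) := by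
  refine continuous_of_charts (fun i q v => if i then
    ψ v + ∑ g, circleCoord 0 (coord g q) * (ψ (FreeGroup.of g • v) - ψ v)
    else starInterpolate ψ q v) ?_ ?_
  · rintro (_ | _) v q hq
    · exact continuousAt_starInterpolate ψ v hq
    · have h_coord (g : Bool) := continuousAt_circleCoord_coord (g := g) hq
      simp only [if_true]
      fun_prop
  · rintro (_ | _) p -
    · exact interpolate_eq_starInterpolate ψ p
    · rw [gauge_true, one_smul, if_pos rfl, interpolate]

open Classical in
/-- The retraction of the covering onto the loop at a vertex fixed by the first generator, in the
coordinate of that loop. -/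
noncomputable def loopCoord (v₀ : V) (p : Cover V) : UnitAddCircle :=
  if p.vertex = v₀ then coord false p.proj else 0

lemma loopCoord_of_vertex_eq {v₀ : V} {p : Cover V} (hp : p.vertex = v₀) :
    loopCoord v₀ p = coord false p.proj := if_pos hp

lemma loopCoord_of_coord_eq_zero (v₀ : V) {p : Cover V} (hp : coord false p.proj = 0) :
    loopCoord v₀ p = 0 := by
  rw [loopCoord, hp, ite_self]

open Classical in
lemma continuous_loopCoord {v₀ : V} (h₀ : FreeGroup.of false • v₀ = v₀) :
    Continuous (loopCoord v₀) := by
  refine continuous_of_charts (fun _ q v => if v = v₀ then coord false q else 0) ?_ ?_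
  · intro i v q _
    by_cases hv : v = v₀
    · simp only [if_pos hv]
      fun_prop
    · simp only [if_neg hv]
      fun_prop
  · intro i p _
    by_cases hp : coord false p.proj = 0
    · rw [loopCoord, hp, ite_self, ite_self]
    · simp only [loopCoord,
        gauge_smul_eq_iff h₀ i (coord_eq_zero_of_ne Bool.false_ne_true hp)]

lemma continuous_mk_of_coord_eq_zero {v₀ : V} (h₀ : FreeGroup.of false • v₀ = v₀)
    {T : Type*} [TopologicalSpace T] {k : T → Rose} (hk : Continuous k)
    (hk_zero : ∀ t, coord true (k t) = 0) : Continuous fun t => (⟨k t, v₀⟩ : Cover V) := by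
  refine continuous_iff_continuousAt.2 fun t₀ =>
    (FiberBundle.continuousAt_totalSpace V _).2 ⟨hk.continuousAt, ?_⟩
  refine continuousAt_const.congr (f := fun _ => v₀) (.of_forall fun t => ?_)
  change v₀ = ((coveringCore V).localTriv (chartAt (k t₀)) ⟨k t, v₀⟩).2
  rw [localTriv_apply]
  exact ((gauge_smul_eq_iff h₀ _ (hk_zero t) v₀).2 rfl).symm

lemma eq_of_swap (hV : ∀ (x : FreeGroup Bool) (v : V), x • x • v = v → x • v = v)
    {T : Type*} [TopologicalSpace T] [PreconnectedSpace T] {γ γ' : C(T, Cover V)}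
    (h_proj : ∀ t, (γ t).proj = (γ' t).proj) {a b : T} (hab : γ a = γ' b) (hba : γ b = γ' a) :
    γ = γ' := by
  have h_orbit : IsLocallyConstant fun t =>
      MulAction.orbit (FreeGroup Bool) ((γ t).vertex, (γ' t).vertex) := by
    refine IsLocallyConstant.iff_eventually_eq _ |>.2 fun t => ?_
    have ht := mem_chart_chartAt (γ t).proj
    generalize chartAt (γ t).proj = i at ht
    filter_upwards [γ.continuous.continuousAt.eventually (eventually_gauge_smul_vertex_eq ht),
      γ'.continuous.continuousAt.eventually (eventually_gauge_smul_vertex_eq (h_proj t ▸ ht))]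
      with s hs hs'
    rw [← MulAction.orbit_smul (gauge i (γ s).proj) (_, _),
      ← MulAction.orbit_smul (gauge i (γ t).proj) (_, (γ' t).vertex),
      Prod.smul_mk, Prod.smul_mk, hs, h_proj s, hs', h_proj t]
  obtain ⟨x, hx⟩ : ((γ b).vertex, (γ a).vertex) ∈
      MulAction.orbit (FreeGroup Bool) ((γ a).vertex, (γ b).vertex) := by
    have h_eq := h_orbit.apply_eq_of_preconnectedSpace a b
    simp only [← hab, ← hba] at h_eq
    exact h_eq ▸ MulAction.mem_orbit_self _
  obtain ⟨hx₁, hx₂⟩ := Prod.mk.inj hx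
  have h_eq : γ a = γ' a := ext_of_vertex (h_proj a) <| calc
    (γ a).vertex = x • (γ a).vertex := (hV x _ (by rw [hx₁, hx₂])).symm
    _ = (γ' a).vertex := by rw [hx₁, hba]
  exact ContinuousMap.ext fun t => congrFun (isCoveringMap_proj.eq_of_comp_eq γ.continuous
    γ'.continuous (funext h_proj) a h_eq) t

end Cover

end Rose

/-! ### Cosets of a cyclic subgroup of a free group -/

section FreeGroupCosets

open FreeGroup

lemma mk_mem_zpowers {α : Type*} {a : α} {L : List (α × Bool)} (hL : ∀ l ∈ L, l.1 = a) :
    FreeGroup.mk L ∈ Subgroup.zpowers (of a) := by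
  induction L with
  | nil => exact one_mem _
  | cons l L ih =>
    rw [← List.singleton_append, ← mul_mk]
    refine mul_mem ?_ (ih fun m hm => hL m (List.mem_cons_of_mem l hm))
    obtain ⟨g, b⟩ := l
    obtain rfl : g = a := hL _ List.mem_cons_self
    cases b
    · exact inv_mem (Subgroup.mem_zpowers _)
    · exact Subgroup.mem_zpowers _

lemma mem_zpowers_of_sq_mem {α : Type*} {a : α} {y : FreeGroup α}
    (hy : y ^ 2 ∈ Subgroup.zpowers (of a)) : y ∈ Subgroup.zpowers (of a) := by
  obtain ⟨n, hn⟩ := Subgroup.mem_zpowers_iff.1 hy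
  let expSum : FreeGroup α →* Multiplicative ℤ := lift fun _ => .ofAdd 1
  have h_sum : n = 2 * (expSum y).toAdd := by
    simpa [expSum] using congrArg (fun z => (expSum z).toAdd) hn
  refine Subgroup.mem_zpowers_iff.2 ⟨(expSum y).toAdd, pow_left_injective two_ne_zero ?_⟩
  simp only
  rw [← hn, ← zpow_natCast, ← zpow_mul, h_sum, mul_comm, Nat.cast_ofNat]

lemma rdropWhile_cons {β : Type*} (p : β → Bool) (b : β) (L : List β) :
    (b :: L).rdropWhile p = if L.rdropWhile p = [] ∧ p b then [] else b :: L.rdropWhile p := by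
  simp only [List.rdropWhile, List.reverse_cons, List.dropWhile_append, List.isEmpty_iff,
    List.reverse_eq_nil_iff]
  split_ifs <;> simp_all

variable {α : Type*} [DecidableEq α]

lemma toWord_of_mul_or (g : α) (x : FreeGroup α) :
    (of g * x).toWord = (g, true) :: x.toWord ∨ x.toWord = (g, false) :: (of g * x).toWord := by
  have h_mul : (of g * x).toWord = reduce ((g, true) :: x.toWord) := by
    rw [toWord_mul, toWord_of, List.singleton_append]
  rw [reduce.cons, reduce_toWord] at h_mul
  rcases h_word : x.toWord with _ | ⟨⟨h, b⟩, L⟩ <;> simp only [h_word] at h_mul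
  · exact .inl h_mul
  · split_ifs at h_mul with h_cancel
    · obtain ⟨rfl, h_b⟩ := h_cancel
      cases b <;> simp_all
    · exact .inl h_mul

lemma toWord_mul_of_or (x : FreeGroup α) (a : α) :
    (x * of a).toWord = x.toWord ++ [(a, true)] ∨
      x.toWord = (x * of a).toWord ++ [(a, false)] := by
  have h_inv := toWord_of_mul_or a (x * of a)⁻¹
  rw [show of a * (x * of a)⁻¹ = x⁻¹ by group, toWord_inv, toWord_inv] at h_inv
  refine h_inv.symm.imp (fun h => ?_) fun h => ?_ <;>
    exact invRev_injective (by rw [h, invRev_append]; rfl)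

/-- The reduced word of `x` without its final letters `a` and `a⁻¹`: the normal form of the left
coset of `x` modulo the powers of `a`. -/
def trimmedWord (a : α) (x : FreeGroup α) : List (α × Bool) :=
  x.toWord.rdropWhile fun l => l.1 = a

lemma trimmedWord_mul_of (a : α) (x : FreeGroup α) :
    trimmedWord a (x * of a) = trimmedWord a x := by
  rcases toWord_mul_of_or x a with h | h <;>
    rw [trimmedWord, trimmedWord, h, List.rdropWhile_concat_pos _ _ _ (by simp)]

lemma trimmedWord_mul_of_mem_zpowers {a : α} (x : FreeGroup α) {y : FreeGroup α}
    (hy : y ∈ Subgroup.zpowers (of a)) : trimmedWord a (x * y) = trimmedWord a x := by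
  obtain ⟨n, rfl⟩ := Subgroup.mem_zpowers_iff.1 hy
  refine zpow_induction_right (P := fun y => trimmedWord a (x * y) = trimmedWord a x)
    (by rw [mul_one]) (fun y h => ?_) (fun y h => ?_) n
  · rw [← mul_assoc, trimmedWord_mul_of, h]
  · rw [← trimmedWord_mul_of, mul_assoc, inv_mul_cancel_right, h]

lemma mem_zpowers_of_trimmedWord_eq_nil {a : α} {x : FreeGroup α} (hx : trimmedWord a x = []) :
    x ∈ Subgroup.zpowers (of a) := by
  rw [← mk_toWord (x := x)]
  exact mk_mem_zpowers fun l hl => by simpa using List.rdropWhile_eq_nil_iff.1 hx l hl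

lemma trimmedWord_of_mul_or (a g : α) (x : FreeGroup α) :
    (trimmedWord a x = [] ∧ g = a) ∨ trimmedWord a (of g * x) = (g, true) :: trimmedWord a x ∨
      trimmedWord a x = (g, false) :: trimmedWord a (of g * x) := by
  unfold trimmedWord
  rcases toWord_of_mul_or g x with h | h <;> rw [h, rdropWhile_cons] <;> split_ifs <;>
    simp_all [-List.rdropWhile_eq_nil_iff]

end FreeGroupCosets

/-- The monodromy action of the covering of the wedge corresponding to the subgroup generated by
the first generator. -/
def Vertex := FreeGroup Bool ⧸ Subgroup.zpowers (FreeGroup.of false)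

namespace Vertex

instance : TopologicalSpace Vertex := ⊥

instance : DiscreteTopology Vertex := ⟨rfl⟩

noncomputable instance : MulAction (FreeGroup Bool) Vertex :=
  inferInstanceAs (MulAction _ (FreeGroup Bool ⧸ Subgroup.zpowers (FreeGroup.of false)))

/-- The vertex fixed by the first generator. -/
def root : Vertex := QuotientGroup.mk 1

lemma of_false_smul_root : FreeGroup.of false • root = root :=
  QuotientGroup.eq.2 (by simp)

/-- The reduced word leading from the root to a vertex; its first letter is the last edge. -/
def word : Vertex → List (Bool × Bool) :=
  Quotient.lift (trimmedWord false) fun x y h => by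
    rw [← trimmedWord_mul_of_mem_zpowers x (QuotientGroup.leftRel_apply.1 h), mul_inv_cancel_left]

lemma word_eq_nil_iff {v : Vertex} : word v = [] ↔ v = root := by
  refine ⟨?_, fun h => h ▸ rfl⟩
  obtain ⟨x, rfl⟩ := QuotientGroup.mk_surjective v
  exact fun hx => QuotientGroup.eq.2 (by simpa using mem_zpowers_of_trimmedWord_eq_nil hx)

lemma word_of_smul_or (g : Bool) (v : Vertex) :
    (v = root ∧ g = false) ∨ word (FreeGroup.of g • v) = (g, true) :: word v ∨
      word v = (g, false) :: word (FreeGroup.of g • v) := by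
  rw [← word_eq_nil_iff]
  obtain ⟨x, rfl⟩ := QuotientGroup.mk_surjective v
  exact trimmedWord_of_mul_or false g x

lemma smul_eq_self_of_smul_smul_eq_self (x : FreeGroup Bool) (v : Vertex) (h : x • x • v = v) :
    x • v = v := by
  obtain ⟨w, rfl⟩ := QuotientGroup.mk_surjective v
  refine QuotientGroup.eq.2 ?_
  have h_sq : (x * (x * w))⁻¹ * w ∈ Subgroup.zpowers (FreeGroup.of false) := QuotientGroup.eq.1 h
  refine mem_zpowers_of_sq_mem ?_
  convert h_sq using 1
  simp only [smul_eq_mul, sq]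
  group

end Vertex

/-! ### Contraction of the trees of the covering -/

namespace Rose

/-- The point of the torus with coordinate `z` along the circle labelled by `g`, the other one
being zero. -/
def single (g : Bool) (z : UnitAddCircle) : UnitAddCircle × UnitAddCircle :=
  if g then (0, z) else (z, 0)

lemma single_zero (g : Bool) : single g 0 = 0 := by
  cases g <;> rfl

lemma single_mem (g : Bool) (z : UnitAddCircle) : single g z ∈ Rose := by
  cases g
  exacts [Or.inr rfl, Or.inl rfl]

lemma continuous_single (g : Bool) : Continuous (single g) := by
  cases g
  exacts [Continuous.prodMk_left 0, Continuous.prodMk_right 0]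

lemma single_coord {q : Rose} {g : Bool} (hq : ∀ h, g ≠ h → coord h q = 0) :
    single g (coord g q) = q.1 := by
  cases g
  · exact Prod.ext rfl (hq true (by simp)).symm
  · exact Prod.ext (hq false (by simp)).symm rfl

lemma exists_forall_coord_eq_zero (q : Rose) : ∃ g, ∀ h, g ≠ h → coord h q = 0 := by
  by_cases hq : coord true q = 0
  · exact ⟨false, by simp [hq]⟩
  · exact ⟨true, fun h hh => coord_eq_zero_of_ne hh hq⟩

/-- The projection of the point at height `t` on the last edge of the branch given by a word. The
last edge is the first letter `(g, s)`; it is traversed backwards if `s` is `false`. -/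
def branchPoint : List (Bool × Bool) → ℝ → UnitAddCircle × UnitAddCircle
  | [], _ => 0
  | (g, s) :: _, t => single g ((if s then t else -t : ℝ) : UnitAddCircle)

lemma branchPoint_zero (w : List (Bool × Bool)) : branchPoint w 0 = 0 := by
  rcases w with _ | ⟨⟨g, s⟩, w⟩
  · rfl
  · rw [branchPoint, neg_zero, ite_self, AddCircle.coe_zero, single_zero]

lemma branchPoint_one (w : List (Bool × Bool)) : branchPoint w 1 = 0 := by
  rcases w with _ | ⟨⟨g, _ | _⟩, w⟩
  · rfl
  · simp [branchPoint, AddCircle.coe_period, single_zero]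
  · simp [branchPoint, AddCircle.coe_period, single_zero]

lemma branchPoint_mem (w : List (Bool × Bool)) (t : ℝ) : branchPoint w t ∈ Rose := by
  rcases w with _ | ⟨⟨g, s⟩, w⟩
  exacts [Or.inl rfl, single_mem g _]

lemma continuous_branchPoint (w : List (Bool × Bool)) : Continuous (branchPoint w) := by
  rcases w with _ | ⟨⟨g, s⟩, w⟩
  · exact continuous_const
  · exact (continuous_single g).comp <| by
      cases s <;> simp only [if_true, Bool.false_eq_true, if_false] <;> fun_prop

/-- The indicator function of the words that have `v` as a suffix, that is, of the branches that
pass through `v`. -/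
def suffixInd (v w : List (Bool × Bool)) : ℝ := if v <:+ w then 1 else 0

lemma suffixInd_cons_interpolate (v : List (Bool × Bool)) (l : Bool × Bool)
    (w : List (Bool × Bool)) (t : ℝ) :
    suffixInd v w + t * (suffixInd v (l :: w) - suffixInd v w) =
      if v = l :: w then t else suffixInd v (l :: w) := by
  split_ifs with hv
  · have h_not : ¬ l :: w <:+ w := fun h => by simpa using h.length_le
    simp [suffixInd, h_not, hv]
  · simp [suffixInd, List.suffix_cons_iff, hv]

/-- The continuous cutoff that is zero for `d ≤ n - 1` and one for `n ≤ d`. -/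
noncomputable def cutoff (n : ℕ) (d : ℝ) : ℝ := projIcc 0 1 zero_le_one (d - n + 1)

lemma continuous_cutoff (n : ℕ) : Continuous (cutoff n) := by
  unfold cutoff
  fun_prop

lemma cutoff_of_le {n : ℕ} {d : ℝ} (h : d ≤ n - 1) : cutoff n d = 0 := by
  rw [cutoff, projIcc_of_le_left _ (by linarith)]

lemma cutoff_of_ge {n : ℕ} {d : ℝ} (h : n ≤ d) : cutoff n d = 1 := by
  rw [cutoff, projIcc_of_right_le _ (by linarith)]

namespace Cover

open Vertex

/-- The height of a point of the covering above the loop at the root. -/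
noncomputable def height (p : Cover Vertex) : ℝ := interpolate (fun v => (word v).length) p

/-- The point `p` lies at height `t` on the last edge of the branch given by the word `w`. -/
structure LiesOnEdge (p : Cover Vertex) (w : List (Bool × Bool)) (t : ℝ) : Prop where
  ne_nil : w ≠ []
  loopCoord_eq_zero : loopCoord root p = 0
  branchPoint_eq : branchPoint w t = p.proj.1
  length_le_height_add_one : w.length ≤ height p + 1
  interpolate_eq (v : List (Bool × Bool)) :
    interpolate (suffixInd v ∘ word) p = if v = w then t else suffixInd v w

lemma liesOnEdge_of_word_smul_eq_cons {p : Cover Vertex} {g : Bool}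
    (hp : ∀ h, g ≠ h → coord h p.proj = 0) (h_loop : loopCoord root p = 0)
    (h_word : word (FreeGroup.of g • p.vertex) = (g, true) :: word p.vertex) :
    LiesOnEdge p ((g, true) :: word p.vertex) (circleCoord 0 (coord g p.proj)) where
  ne_nil := List.cons_ne_nil _ _
  loopCoord_eq_zero := h_loop
  branchPoint_eq := by
    simp only [branchPoint, if_true, coe_circleCoord, single_coord hp]
  length_le_height_add_one := by
    have h_nonneg := (circleCoord_mem 0 (coord g p.proj)).1
    rw [height, interpolate_of_coord_eq_zero hp, h_word]
    push_cast [List.length_cons]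
    linarith
  interpolate_eq v := by
    rw [interpolate_of_coord_eq_zero hp, Function.comp, Function.comp, h_word,
      suffixInd_cons_interpolate]

lemma liesOnEdge_of_word_eq_cons {p : Cover Vertex} {g : Bool}
    (hp : ∀ h, g ≠ h → coord h p.proj = 0) (h_loop : loopCoord root p = 0)
    (h_word : word p.vertex = (g, false) :: word (FreeGroup.of g • p.vertex)) :
    LiesOnEdge p (word p.vertex) (1 - circleCoord 0 (coord g p.proj)) where
  ne_nil := by rw [h_word]; exact List.cons_ne_nil _ _
  loopCoord_eq_zero := h_loop
  branchPoint_eq := by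
    simp only [h_word, branchPoint, Bool.false_eq_true, if_false, neg_sub, AddCircle.coe_sub,
      AddCircle.coe_period, sub_zero, coe_circleCoord, single_coord hp]
  length_le_height_add_one := by
    have h_lt := (circleCoord_mem 0 (coord g p.proj)).2
    rw [height, interpolate_of_coord_eq_zero hp, h_word]
    push_cast [List.length_cons]
    linarith
  interpolate_eq v := by
    rw [interpolate_of_coord_eq_zero hp, Function.comp, Function.comp, h_word,
      ← suffixInd_cons_interpolate]
    ring

lemma exists_liesOnEdge_or (p : Cover Vertex) :
    (p.vertex = root ∧ coord true p.proj = 0) ∨ ∃ w t, LiesOnEdge p w t := by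
  obtain ⟨g, hg⟩ := exists_forall_coord_eq_zero p.proj
  by_cases h_root : p.vertex = root ∧ g = false
  · exact .inl ⟨h_root.1, hg true (by simp [h_root.2])⟩
  have h_loop : loopCoord root p = 0 := by
    cases g
    · exact if_neg fun h => h_root ⟨h, rfl⟩
    · exact loopCoord_of_coord_eq_zero root (hg false (by simp))
  rcases word_of_smul_or g p.vertex with h | h | h
  · exact absurd h h_root
  · exact .inr ⟨_, _, liesOnEdge_of_word_smul_eq_cons hg h_loop h⟩
  · exact .inr ⟨_, _, liesOnEdge_of_word_eq_cons hg h_loop h⟩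

/-- The nonempty words of length at most `N`. -/
noncomputable def shortWords (N : ℕ) : Finset (List (Bool × Bool)) :=
  (List.finite_length_le (Bool × Bool) N).toFinset.erase []

lemma mem_shortWords {N : ℕ} {v : List (Bool × Bool)} :
    v ∈ shortWords N ↔ v ≠ [] ∧ v.length ≤ N := by
  simp [shortWords]

/-- The contribution of the edge ending at `v` to the projection of the truncation of `p` at
height `d`. -/
noncomputable def truncationTerm (d : ℝ) (p : Cover Vertex) (v : List (Bool × Bool)) :
    UnitAddCircle × UnitAddCircle :=
  branchPoint v (interpolate (suffixInd v ∘ word) p * cutoff v.length d)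

/-- The projection of the point at height at most `d` on the shortest path from `p` to the loop at
the root, for points `p` of height at most `N - 1`. Every edge of this path contributes a summand in
the torus, which vanishes on the edges traversed completely. -/
noncomputable def truncation (N : ℕ) (d : ℝ) (p : Cover Vertex) : UnitAddCircle × UnitAddCircle :=
  (loopCoord root p, 0) + ∑ v ∈ shortWords N, truncationTerm d p v

lemma continuous_truncation (N : ℕ) :
    Continuous fun a : ℝ × Cover Vertex => truncation N a.1 a.2 := by
  have h_loop := continuous_loopCoord of_false_smul_root
  have h_interpolate (v) := continuous_interpolate (suffixInd v ∘ word)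
  have h_cutoff := continuous_cutoff
  have h_point := continuous_branchPoint
  unfold truncation truncationTerm
  fun_prop

lemma truncation_of_vertex_eq_root {p : Cover Vertex} (h_vertex : p.vertex = root)
    (h_coord : coord true p.proj = 0) (N : ℕ) (d : ℝ) : truncation N d p = p.proj.1 := by
  have h_active : ∀ h, false ≠ h → coord h p.proj = 0 := by simpa using h_coord
  rw [truncation, Finset.sum_eq_zero fun v hv => ?_, add_zero, loopCoord_of_vertex_eq h_vertex]
  · exact Prod.ext rfl h_coord.symm
  · rw [truncationTerm, interpolate_of_coord_eq_zero h_active, h_vertex, of_false_smul_root,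
      sub_self, mul_zero, add_zero, Function.comp, word_eq_nil_iff.2 rfl, suffixInd,
      if_neg (by simpa using (mem_shortWords.1 hv).1), zero_mul, branchPoint_zero]

lemma truncation_zero (N : ℕ) (p : Cover Vertex) : truncation N 0 p = (loopCoord root p, 0) := by
  rw [truncation, Finset.sum_eq_zero fun v hv => ?_, add_zero]
  have h_length : (1 : ℝ) ≤ v.length := by
    exact_mod_cast List.length_pos_iff.2 (mem_shortWords.1 hv).1
  rw [truncationTerm, cutoff_of_le (by linarith), mul_zero, branchPoint_zero]

namespace LiesOnEdge

variable {p : Cover Vertex} {w : List (Bool × Bool)} {t : ℝ}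

lemma suffix_of_truncationTerm_ne_zero (hp : LiesOnEdge p w t) {d : ℝ} {v : List (Bool × Bool)}
    (hv : truncationTerm d p v ≠ 0) : v <:+ w := by
  by_contra h
  refine hv ?_
  rw [truncationTerm, hp.interpolate_eq, if_neg fun (h_eq : v = w) => h (h_eq ▸ List.suffix_rfl),
    suffixInd, if_neg h, zero_mul, branchPoint_zero]

lemma truncationTerm_of_ne (hp : LiesOnEdge p w t) {v : List (Bool × Bool)} (hv : v ≠ w) {d : ℝ}
    (hd : v.length ≤ d) : truncationTerm d p v = 0 := by
  rw [truncationTerm, hp.interpolate_eq, if_neg hv, suffixInd, cutoff_of_ge hd, mul_one]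
  split_ifs
  exacts [branchPoint_one v, branchPoint_zero v]

lemma eq_of_truncationTerm_ne_zero (hp : LiesOnEdge p w t) {d : ℝ} {v v' : List (Bool × Bool)}
    (hv : truncationTerm d p v ≠ 0) (hv' : truncationTerm d p v' ≠ 0) : v = v' := by
  wlog h_le : v.length ≤ v'.length generalizing v v'
  · exact (this hv' hv (le_of_not_ge h_le)).symm
  have hv_w := hp.suffix_of_truncationTerm_ne_zero hv
  have hv'_w := hp.suffix_of_truncationTerm_ne_zero hv'
  refine (List.suffix_of_suffix_length_le hv_w hv'_w h_le).eq_of_length (h_le.antisymm ?_)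
  by_contra! h_lt
  have h_cast : (v.length : ℝ) + 1 ≤ v'.length := by exact_mod_cast h_lt
  rcases le_or_gt (v.length : ℝ) d with hd | hd
  · refine hv (hp.truncationTerm_of_ne ?_ hd)
    rintro rfl
    exact h_lt.not_ge hv'_w.length_le
  · refine hv' ?_
    rw [truncationTerm, cutoff_of_le (by linarith), mul_zero, branchPoint_zero]

lemma truncation_eq_sum (hp : LiesOnEdge p w t) (N : ℕ) (d : ℝ) :
    truncation N d p = ∑ v ∈ shortWords N, truncationTerm d p v := by
  rw [truncation, hp.loopCoord_eq_zero, Prod.mk_zero_zero, zero_add]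

end LiesOnEdge

lemma truncation_mem (N : ℕ) (d : ℝ) (p : Cover Vertex) : truncation N d p ∈ Rose := by
  rcases exists_liesOnEdge_or p with ⟨h_vertex, h_coord⟩ | ⟨w, t, hp⟩
  · rw [truncation_of_vertex_eq_root h_vertex h_coord]
    exact p.proj.2
  rw [hp.truncation_eq_sum]
  by_cases h_ex : ∃ v ∈ shortWords N, truncationTerm d p v ≠ 0
  · obtain ⟨v, hv, h_ne⟩ := h_ex
    rw [Finset.sum_eq_single_of_mem v hv fun v' _ hv' =>
      by_contra fun h => hv' (hp.eq_of_truncationTerm_ne_zero h h_ne)]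
    exact branchPoint_mem v _
  · push Not at h_ex
    rw [Finset.sum_eq_zero h_ex]
    exact Or.inl rfl

lemma truncation_of_height_le {N : ℕ} {p : Cover Vertex} (hp : height p + 1 ≤ N) :
    truncation N N p = p.proj.1 := by
  rcases exists_liesOnEdge_or p with ⟨h_vertex, h_coord⟩ | ⟨w, t, hw⟩
  · exact truncation_of_vertex_eq_root h_vertex h_coord N N
  have h_length : w.length ≤ N := by exact_mod_cast hw.length_le_height_add_one.trans hp
  rw [hw.truncation_eq_sum,
    Finset.sum_eq_single_of_mem w (mem_shortWords.2 ⟨hw.ne_nil, h_length⟩)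
      fun v hv h_ne => hw.truncationTerm_of_ne h_ne (by exact_mod_cast (mem_shortWords.1 hv).2),
    truncationTerm, hw.interpolate_eq, if_pos rfl, cutoff_of_ge (by exact_mod_cast h_length),
    mul_one, hw.branchPoint_eq]

lemma exists_deformation {K : Type*} [TopologicalSpace K] [CompactSpace K]
    (Φ : C(K, Cover Vertex)) :
    ∃ D : C(unitInterval × Cover Vertex, Rose), (∀ x, D (0, Φ x) = (Φ x).proj) ∧
      (∀ p, coord true (D (1, p)) = 0) ∧
      ∀ t p, p.vertex = root → coord true p.proj = 0 → D (t, p) = p.proj := by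
  have h_cont : Continuous fun x => height (Φ x) := (continuous_interpolate _).comp Φ.continuous
  obtain ⟨B, hB⟩ := (isCompact_range h_cont).bddAbove
  obtain ⟨N, hN⟩ := exists_nat_ge (B + 1)
  refine ⟨⟨fun a => ⟨truncation N (N * (1 - a.1)) a.2, truncation_mem _ _ _⟩, ?_⟩,
    fun x => Subtype.ext ?_, fun p => ?_, fun t p h_vertex h_coord => Subtype.ext ?_⟩
  · exact ((continuous_truncation N).comp (f := fun a : unitInterval × Cover Vertex =>
      ((N * (1 - a.1) : ℝ), a.2)) (by fun_prop)).subtype_mk _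
  · simp only [ContinuousMap.coe_mk, Icc.coe_zero, sub_zero, mul_one]
    exact truncation_of_height_le (by linarith [hB (mem_range_self x)])
  · simp only [ContinuousMap.coe_mk, Icc.coe_one, sub_self, mul_zero, coord, truncation_zero]
  · exact truncation_of_vertex_eq_root h_vertex h_coord _ _

end Cover

end Rose

/-! ### Lifting maps to the covering -/

lemma exists_lift_eqOn_of_deformation {E B R : Type*} [TopologicalSpace E] [TopologicalSpace B]
    [TopologicalSpace R] {p : E → B} (hp : IsCoveringMap p) (r : C(unitInterval × R, R))
    (r_one : ∀ x, r (1, x) = x) {A : Set R} (hA : ∀ t, ∀ a ∈ A, r (t, a) = a) (k : C(R, B))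
    (σ : C(R, E)) (hσ : ∀ x, k (r (0, x)) = p (σ x)) :
    ∃ Ψ : C(R, E), (∀ x, p (Ψ x) = k x) ∧ ∀ a ∈ A, Ψ a = σ a := by
  obtain ⟨Φ, hΦ, hΦ_zero⟩ : ∃ Φ : C(unitInterval × R, E),
      (∀ a, p (Φ a) = k (r a)) ∧ ∀ x, Φ (0, x) = σ x :=
    ⟨hp.liftHomotopy (k.comp r) σ hσ, congrFun (hp.liftHomotopy_lifts (k.comp r) σ hσ),
      hp.liftHomotopy_zero (k.comp r) σ hσ⟩
  refine ⟨Φ.curry 1, fun x => (hΦ _).trans (by rw [r_one]), fun a ha => ?_⟩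
  rw [← hΦ_zero]
  exact hp.const_of_comp (g := fun t => Φ (t, a)) (by fun_prop)
    (fun t t' => by rw [hΦ, hΦ, hA t a ha, hA t' a ha]) 1 0

section Lift

open Rose (Cover coord)

lemma exists_lift_proj_vertex_eq_root (k : C(PSq, Rose))
    (hk : ∀ p : PSq, innerGauge p = 1 / 4 → coord true (k p) = 0) :
    ∃ Ψ : C(PSq, Cover Vertex), (∀ p, (Ψ p).proj = k p) ∧
      ∀ p : PSq, innerGauge p = 1 / 4 → (Ψ p).vertex = Vertex.root := by
  let σ : C(PSq, Cover Vertex) := ⟨fun p => ⟨k (contractSq (0, p)), Vertex.root⟩,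
    Cover.continuous_mk_of_coord_eq_zero Vertex.of_false_smul_root (by fun_prop)
      fun p => hk _ (innerGauge_contractSq_zero p)⟩
  obtain ⟨Ψ, hΨ, hΨ_inner⟩ := exists_lift_eqOn_of_deformation Cover.isCoveringMap_proj contractSq
    contractSq_one (A := {p | innerGauge p = 1 / 4})
    (fun t _ hp => contractSq_of_innerGauge_eq t hp) k σ fun _ => rfl
  exact ⟨Ψ, hΨ, fun p hp => congrArg Cover.vertex (hΨ_inner p hp)⟩

section Descent

variable {k : C(X, Rose)} {Ψ : C(PSq, Cover Vertex)}

lemma lift_eq_of_snd_eq (hk : ∀ x ∈ C1, ∀ y ∈ C1, k x = k y)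
    (hΨ : ∀ p, (Ψ p).proj = k (proj p)) {p q : PSq}
    (hpq : p.1.2 = q.1.2) (hp : |p.1.2| = 1) : Ψ p = Ψ q := by
  have h_mem : ∀ s : unitInterval, ((s : ℝ), p.1.2) ∈ PSq := fun s =>
    mem_PSq_of_outerGauge_eq_one (outerGauge_of_abs_snd_eq_one s.2 hp)
  have h_C1 : ∀ s, proj ⟨_, h_mem s⟩ ∈ C1 := fun s => mem_C1_iff.2 ((lev_proj _).trans hp)
  have h_const : ∀ s s', Ψ ⟨_, h_mem s⟩ = Ψ ⟨_, h_mem s'⟩ :=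
    Cover.isCoveringMap_proj.const_of_comp (g := fun s => Ψ ⟨_, h_mem s⟩) (by fun_prop)
      fun s s' => (hΨ _).trans ((hk _ (h_C1 s) _ (h_C1 s')).trans (hΨ _).symm)
  exact (h_const ⟨p.1.1, fst_mem_Icc p⟩ ⟨q.1.1, fst_mem_Icc q⟩).trans
    (congrArg Ψ (Subtype.ext (Prod.ext rfl hpq)))

-- The lifts along the two seam edges lie over the same path and have swapped end points.
lemma seamCompatible_of_lift (hk : ∀ x ∈ C1, ∀ y ∈ C1, k x = k y)
    (hΨ : ∀ p, (Ψ p).proj = k (proj p)) :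
    SeamCompatible Ψ := by
  have h_left : ∀ y : Icc (-1 : ℝ) 1, ((0, y) : ℝ × ℝ) ∈ PSq := fun y =>
    mem_PSq_of_outerGauge_eq_one (outerGauge_zero_left (abs_le.2 y.2))
  have h_right : ∀ y : Icc (-1 : ℝ) 1, ((1, -y) : ℝ × ℝ) ∈ PSq := fun y =>
    mem_PSq_of_outerGauge_eq_one (outerGauge_one_left ((abs_neg _).trans_le (abs_le.2 y.2)))
  let γ : C(Icc (-1 : ℝ) 1, Cover Vertex) := ⟨fun y => Ψ ⟨_, h_left y⟩, by fun_prop⟩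
  let γ' : C(Icc (-1 : ℝ) 1, Cover Vertex) := ⟨fun y => Ψ ⟨_, h_right y⟩, by fun_prop⟩
  have h_proj : ∀ y, (γ y).proj = (γ' y).proj := fun y =>
    (hΨ _).trans <| (congrArg k (seamCompatible_proj _ _ rfl rfl (neg_neg _).symm)).trans
      (hΨ _).symm
  have h_bottom : γ ⟨-1, by simp⟩ = γ' ⟨1, by simp⟩ := lift_eq_of_snd_eq hk hΨ rfl (by simp)
  have h_top : γ ⟨1, by simp⟩ = γ' ⟨-1, by simp⟩ :=
    lift_eq_of_snd_eq hk hΨ (neg_neg _).symm (by simp)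
  have : PreconnectedSpace (Icc (-1 : ℝ) 1) := Subtype.preconnectedSpace isPreconnected_Icc
  have h_eq : γ = γ' :=
    Cover.eq_of_swap Vertex.smul_eq_self_of_smul_smul_eq_self h_proj h_bottom h_top
  intro p q hp hq hpq
  let y : Icc (-1 : ℝ) 1 := ⟨p.1.2, abs_le.1 (abs_snd_le_one p)⟩
  calc Ψ p = γ y := congrArg Ψ (Subtype.ext (Prod.ext hp rfl))
    _ = γ' y := by rw [h_eq]
    _ = Ψ q := congrArg Ψ (Subtype.ext (Prod.ext hq.symm (by simp [y, hpq])))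

lemma lift_eq_of_proj_mem_C1 (hk : ∀ x ∈ C1, ∀ y ∈ C1, k x = k y)
    (hΨ : ∀ p, (Ψ p).proj = k (proj p)) {p q : PSq} (hp : proj p ∈ C1) (hq : proj q ∈ C1) :
    Ψ p = Ψ q := by
  rw [mem_C1_iff, lev_proj] at hp hq
  obtain h | h := abs_eq_abs.1 (hp.trans hq.symm)
  · exact lift_eq_of_snd_eq hk hΨ h hp
  have h_left : ((0, p.1.2) : ℝ × ℝ) ∈ PSq :=
    mem_PSq_of_outerGauge_eq_one (outerGauge_zero_left hp.le)
  have h_right : ((1, q.1.2) : ℝ × ℝ) ∈ PSq :=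
    mem_PSq_of_outerGauge_eq_one (outerGauge_one_left hq.le)
  calc Ψ p = Ψ ⟨_, h_left⟩ := lift_eq_of_snd_eq hk hΨ rfl hp
    _ = Ψ ⟨_, h_right⟩ := seamCompatible_of_lift hk hΨ _ _ rfl rfl h
    _ = Ψ q := lift_eq_of_snd_eq hk hΨ rfl hq

end Descent

lemma exists_lift_eq_on_C1 {k : C(X, Rose)} (hk_C1 : ∀ x ∈ C1, ∀ y ∈ C1, k x = k y)
    (hk_C2 : ∀ x ∈ C2, coord true (k x) = 0) :
    ∃ Φ : C(X, Cover Vertex), (∀ x, (Φ x).proj = k x) ∧ (∀ x ∈ C2, (Φ x).vertex = Vertex.root) ∧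
      ∀ x ∈ C1, ∀ y ∈ C1, Φ x = Φ y := by
  obtain ⟨Ψ, hΨ, hΨ_inner⟩ := exists_lift_proj_vertex_eq_root (k.comp proj) fun p hp =>
    hk_C2 _ (mem_C2_iff.2 ⟨p, rfl, hp⟩)
  have h_seam : SeamCompatible Ψ := seamCompatible_of_lift hk_C1 hΨ
  obtain ⟨Φ, hΦ⟩ : ∃ Φ : C(X, Cover Vertex), ∀ p, Φ (proj p) = Ψ p :=
    ⟨(descend (T := Unit) (Ψ.comp ContinuousMap.snd) fun _ => h_seam).curry (),
      fun p => descend_apply (T := Unit) (Ψ.comp ContinuousMap.snd) (fun _ => h_seam) () p⟩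
  refine ⟨Φ, surjective_proj.forall.2 fun p => ?_, fun x hx => ?_,
    surjective_proj.forall.2 fun p hp => surjective_proj.forall.2 fun q hq => ?_⟩
  · rw [hΦ, hΨ, ContinuousMap.comp_apply]
  · obtain ⟨p, rfl, hp⟩ := mem_C2_iff.1 hx
    rw [hΦ, hΨ_inner p hp]
  · rw [hΦ, hΦ, lift_eq_of_proj_mem_C1 hk_C1 hΨ hp hq]

end Lift

/-! ### Deformation into `C₁` and fixed points -/

lemma CollapsesC1.homotopicWith_spine_comp_collapse_comp {f : C(X, X)} (hf : CollapsesC1 f) :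
    f.HomotopicWith (spine.comp (collapse.comp f)) CollapsesC1 := by
  obtain ⟨H⟩ := homotopicWith_spine_comp_collapse
  exact ⟨{ toContinuousMap := H.toContinuousMap.comp (.prodMap (.id _) f)
           map_zero_left := fun x => H.map_zero_left (f x)
           map_one_left := fun x => H.map_one_left (f x)
           prop' := fun t =>
            { mapsTo_C2 := (H.prop' t).comp hf.mapsTo_C2
              eq_on_C1 := fun x hx y hy => congrArg (fun z => H (t, z)) (hf.eq_on_C1 x hx y hy) } }⟩

lemma CollapsesC1.exists_homotopicWith_forall_mem_C1 {f : C(X, X)} (hf : CollapsesC1 f) :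
    ∃ g₀ : C(X, X), f.HomotopicWith g₀ CollapsesC1 ∧ ∀ x, g₀ x ∈ C1 := by
  have h_C2 : ∀ x ∈ C2, Rose.coord true (collapse (f x)) = 0 := fun x hx =>
    collapse_mem_C1 (hf.mapsTo_C2 hx)
  obtain ⟨Φ, hΦ, hΦ_C2, hΦ_C1⟩ := exists_lift_eq_on_C1 (k := collapse.comp f)
    (fun x hx y hy => congrArg collapse (hf.eq_on_C1 x hx y hy)) h_C2
  obtain ⟨D, hD_zero, hD_one, hD_root⟩ := Rose.Cover.exists_deformation Φ
  have h_spine : ∀ q : Rose, Rose.coord true q = 0 → spine q ∈ C1 := fun q hq =>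
    Rose.eq_inl_of_snd_eq_zero hq ▸ spine_inl_mem_C1 _
  let H : C(unitInterval × X, X) := spine.comp (D.comp (.prodMap (.id _) Φ))
  have hH : (spine.comp (collapse.comp f)).HomotopicWith (H.curry 1) CollapsesC1 :=
    ⟨{ toContinuousMap := H
       map_zero_left := fun x => congrArg spine ((hD_zero x).trans (hΦ x))
       map_one_left := fun _ => rfl
       prop' := fun t =>
        { mapsTo_C2 := fun x hx => by
            have h_coord : Rose.coord true (Φ x).proj = 0 := (hΦ x).symm ▸ h_C2 x hx
            have h_fixed : D (t, Φ x) = (Φ x).proj := hD_root t _ (hΦ_C2 x hx) h_coord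
            exact h_spine _ (h_fixed.symm ▸ h_coord)
          eq_on_C1 := fun x hx y hy =>
            congrArg (fun e => spine (D (t, e))) (hΦ_C1 x hx y hy) } }⟩
  exact ⟨H.curry 1, hf.homotopicWith_spine_comp_collapse_comp.trans hH,
    fun x => h_spine _ (hD_one (Φ x))⟩

theorem stmt_15_general (f : C(X, X)) (hmaps : MapsTo f Bd C1)
    (h1 : Inessential (restrictMap f (hmaps.mono_left Set.subset_union_left : MapsTo f C1 C1))) :
    ∃ g : C(X, X), BoundaryHomotopic f g ∧
      (∃ a b : X, {x : X | g x = x} ⊆ {a, b}) ∧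
      ∃ x₀ : X, {x : X | g x = x ∧ x ∉ Bd} = {x₀} := by
  obtain ⟨f₁, hf₁, c, hc, hfc⟩ := exists_homotopicWith_eq_const_on_C1 hmaps h1
  have hf₁_Bd : MapsTo f₁ Bd C1 := homotopicWith_right hf₁
  have hf₁_collapses : CollapsesC1 f₁ :=
    ⟨hf₁_Bd.mono_left C2_subset_Bd, fun x hx y hy => (hfc x hx).trans (hfc y hy).symm⟩
  obtain ⟨g₀, hg₀, hg₀_C1⟩ := hf₁_collapses.exists_homotopicWith_forall_mem_C1
  obtain ⟨g, hg, a, b, hab, hb⟩ := CollapsesC1.exists_homotopicWith_fixedPoints hg₀ hg₀_C1 hc hfc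
  exact ⟨g, .of_homotopicWith (hf₁.trans hg), ⟨a, b, hab⟩, b, hb⟩

/-- A boundary semi-essential map of the punctured Möbius band with `f(∂X) ⊆ C₁`,
`f|C₂ : C₂ → C₁` essential and `f|C₁ : C₁ → C₁` inessential, is boundary-homotopic to
a map with at most two fixed points, exactly one of which lies in the interior. -/
theorem stmt_15 (f : C(X, X)) (hf : BoundaryPreserving f)
    (hmaps : MapsTo f Bd C1)
    (he2 : Essential (restrictMap f (hmaps.mono_left Set.subset_union_right : MapsTo f C2 C1)))
    (h1 : Inessential (restrictMap f (hmaps.mono_left Set.subset_union_left : MapsTo f C1 C1))) :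
    ∃ g : C(X, X), BoundaryHomotopic f g ∧
      (∃ a b : X, {x : X | g x = x} ⊆ {a, b}) ∧
      ∃ x₀ : X, {x : X | g x = x ∧ x ∉ Bd} = {x₀} :=
  stmt_15_general f hmaps h1

end PMB
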